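/- arXiv:math/0601226 — 2 statements merged into one kernel-verified Lean document; each statement's English description precedes it below -/
import Mathlib

section
/- For a metric space X and integer m ≥ 0 the following are equivalent: (a) S^m is a small scale Lipschitz extensor of X; (b) there are constants t, M > 0 such that every cover U = {U_0,…,U_{m+1}} of X by m+2 subsets which is r-Lebesgue for some r with 0 < r < M admits a (t·r)-Lebesgue refinement V of multiplicity at most m+1. -/
/-- A metric space `E` is a large scale Lipschitz extensor of `X`: there are `C, M > 0` such
that every `λ`-Lipschitz map on a nonempty subset of `X` with `0 < λ < M` extends to a
`(C·λ)`-Lipschitz map on `X`. -/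
def LargeScaleLipschitzExtensorOf (X E : Type*) [MetricSpace X] [MetricSpace E] : Prop :=
  ∃ C : ℝ, 0 < C ∧ ∃ M : ℝ, 0 < M ∧ ∀ A : Set X, A.Nonempty →
    ∀ lam : ℝ, 0 < lam → lam < M →
      ∀ f : A → E, (∀ a b : A, dist (f a) (f b) ≤ lam * dist (a : X) (b : X)) →
        ∃ g : X → E, (∀ a : A, g a = f a) ∧
          ∀ x y : X, dist (g x) (g y) ≤ C * lam * dist x y

/-- A metric space `E` is a small scale Lipschitz extensor of `X`: there are `C, M > 0` such
that every `λ`-Lipschitz map on a nonempty subset of `X` with `λ > M` extends to a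
`(C·λ)`-Lipschitz map on `X`. -/
def SmallScaleLipschitzExtensorOf (X E : Type*) [MetricSpace X] [MetricSpace E] : Prop :=
  ∃ C : ℝ, 0 < C ∧ ∃ M : ℝ, 0 < M ∧ ∀ A : Set X, A.Nonempty →
    ∀ lam : ℝ, M < lam →
      ∀ f : A → E, (∀ a b : A, dist (f a) (f b) ≤ lam * dist (a : X) (b : X)) →
        ∃ g : X → E, (∀ a : A, g a = f a) ∧
          ∀ x y : X, dist (g x) (g y) ≤ C * lam * dist x y
/-- The multiplicity of a family `V` of subsets of `X` is at most `m`. -/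
def MultiplicityLE {X : Type*} [MetricSpace X] (V : Set (Set X)) (m : ℕ) : Prop :=
  ∀ x : X, {W | W ∈ V ∧ x ∈ interior W}.Finite ∧ {W | W ∈ V ∧ x ∈ interior W}.ncard ≤ m

/-!
`S^m` is bi-Lipschitz to the boundary of an `(m + 1)`-simplex, modelled here as the sup-norm unit
sphere of the boundary of the positive orthant in `m + 2` coordinates: the cones over both are
exchanged by Lipschitz positively homogeneous maps, namely the projection along the diagonal and
the translation along the diagonal onto the orthant boundary.

A map `g` into the model is essentially a cover `{0 < g i}` by `m + 2` sets without a common point,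
of Lebesgue number comparable to the inverse of the Lipschitz constant. Given an extensor and a
cover `U`, the bump functions of `U` map the points where some bump vanishes into the model; an
extension of this map yields the desired refinement of `U`. Conversely, a map into the model
extends to a Lipschitz map `h` into the whole orthant boundary. Bump functions of a refinement of
the cover `{‖h‖ < 1 / 2 ∨ 0 < h i}` replace `h` where it is small, without making all coordinates
positive anywhere, and the resulting map stays away from `0`, so it can be normalized.
-/

open Set Metric Function
open scoped NNReal

open NormedSpace hiding normalize

section Lipschitz

lemma lipschitzWith_of_forall_apply {X ι : Type*} [PseudoEMetricSpace X] [Fintype ι] {K : ℝ≥0}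
    {f : X → ι → ℝ} (hf : ∀ i, LipschitzWith K fun x => f x i) : LipschitzWith K f :=
  fun x y => edist_pi_le_iff.2 fun i => hf i x y

lemma lipschitzWith_apply {X ι : Type*} [PseudoEMetricSpace X] [Fintype ι] {K : ℝ≥0}
    {f : X → ι → ℝ} (hf : LipschitzWith K f) (i : ι) : LipschitzWith K fun x => f x i := by
  simpa only [one_mul] using! (LipschitzWith.eval (α := fun _ : ι => ℝ) i).comp hf

lemma lipschitzOnWith_normalize {V : Type*} [NormedAddCommGroup V] [NormedSpace ℝ V]
    (K : ℝ≥0) :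
    LipschitzOnWith (2 * K) NormedSpace.normalize {v : V | 1 ≤ K * ‖v‖} := by
  refine LipschitzOnWith.of_dist_le_mul fun u hu v hv => ?_
  have hv0 : v ≠ 0 := by
    rintro rfl
    norm_num at hv
  have hsplit : ‖u‖ • (NormedSpace.normalize u - NormedSpace.normalize v) =
      (u - v) + (‖v‖ - ‖u‖) • NormedSpace.normalize v := by
    rw [smul_sub, sub_smul, norm_smul_normalize, norm_smul_normalize]
    abel
  rw [dist_eq_norm, dist_eq_norm]
  calc ‖NormedSpace.normalize u - NormedSpace.normalize v‖
      ≤ K * ‖u‖ * ‖NormedSpace.normalize u - NormedSpace.normalize v‖ :=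
        le_mul_of_one_le_left (norm_nonneg _) hu
    _ = K * ‖(u - v) + (‖v‖ - ‖u‖) • NormedSpace.normalize v‖ := by
        rw [← hsplit, norm_smul, norm_norm, mul_assoc]
    _ ≤ K * (‖u - v‖ + |‖v‖ - ‖u‖| * ‖NormedSpace.normalize v‖) := by
        gcongr
        exact norm_add_le_of_le le_rfl (norm_smul_le _ _)
    _ ≤ K * (‖u - v‖ + ‖u - v‖) := by
        rw [norm_normalize hv0, mul_one, norm_sub_rev u v]
        gcongr
        exact abs_norm_sub_norm_le v u
    _ = (2 * K : ℝ≥0) * ‖u - v‖ := by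
        push_cast
        ring

lemma ball_subset_setOf_pos_of_lipschitzWith {X : Type*} [PseudoMetricSpace X] {K : ℝ≥0}
    {f : X → ℝ} (hf : LipschitzWith K f) {x : X} {s : ℝ} (hs : K * s < f x) :
    ball x s ⊆ {z | 0 < f z} := fun z hz => by
  have hle : K * dist x z ≤ K * s := by
    gcongr
    exact (mem_ball'.1 hz).le
  have habs : f x - f z ≤ K * dist x z := (le_abs_self _).trans (hf.dist_le_mul x z)
  rw [mem_ofPred_eq]
  linarith

end Lipschitz

section Extensor

variable {X E E' : Type*} [MetricSpace X] [MetricSpace E] [MetricSpace E']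

lemma smallScaleLipschitzExtensorOf_iff :
    SmallScaleLipschitzExtensorOf X E ↔ ∃ C M : ℝ≥0, ∀ A : Set X, A.Nonempty → ∀ K : ℝ≥0, M < K →
      ∀ f : A → E, LipschitzWith K f →
        ∃ g : X → E, (∀ a : A, g a = f a) ∧ LipschitzWith (C * K) g := by
  constructor
  · rintro ⟨C, hC, M, hM, h⟩
    lift C to ℝ≥0 using hC.le
    lift M to ℝ≥0 using hM.le
    refine ⟨C, M, fun A hA K hK f hf => ?_⟩
    obtain ⟨g, hgf, hg⟩ := h A hA K hK f hf.dist_le_mul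
    exact ⟨g, hgf, LipschitzWith.of_dist_le_mul hg⟩
  · rintro ⟨C, M, h⟩
    refine ⟨C + 1, by positivity, M + 1, by positivity, fun A hA lam hlam f hf => ?_⟩
    lift lam to ℝ≥0 using (by positivity : (0 : ℝ) ≤ M + 1).trans hlam.le
    have hM : M < lam := (lt_add_one M).trans (mod_cast hlam)
    obtain ⟨g, hgf, hg⟩ := h A hA lam hM f (LipschitzWith.of_dist_le_mul hf)
    have hg' : LipschitzWith ((C + 1) * lam) g := hg.weaken (by gcongr; exact le_self_add)
    exact ⟨g, hgf, hg'.dist_le_mul⟩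

lemma SmallScaleLipschitzExtensorOf.of_lipschitz_retraction {p : E → E'} {q : E' → E}
    {Kp Kq : ℝ≥0} (h : SmallScaleLipschitzExtensorOf X E) (hpq : LeftInverse p q)
    (hp : LipschitzWith Kp p) (hq : LipschitzWith Kq q) :
    SmallScaleLipschitzExtensorOf X E' := by
  rw [smallScaleLipschitzExtensorOf_iff] at h ⊢
  obtain ⟨C, M, h⟩ := h
  refine ⟨Kp * C * (Kq + 1), M, fun A hA K hK f hf => ?_⟩
  have hqf : LipschitzWith ((Kq + 1) * K) (q ∘ f) := (hq.weaken le_self_add).comp hf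
  have hM : M < (Kq + 1) * K := hK.trans_le (le_mul_of_one_le_left' le_add_self)
  obtain ⟨g, hgf, hg⟩ := h A hA _ hM _ hqf
  refine ⟨p ∘ g, fun a => ?_, ?_⟩
  · rw [comp_apply, hgf, comp_apply, hpq]
  · simpa only [mul_assoc] using hp.comp hg

lemma smallScaleLipschitzExtensorOf_coe_iff {S : Set E} (hS : S.Nonempty) :
    SmallScaleLipschitzExtensorOf X ↥S ↔ ∃ C M : ℝ≥0, ∀ (A : Set X) (K : ℝ≥0), M < K →
      ∀ f : X → E, LipschitzOnWith K f A → MapsTo f A S →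
        ∃ g : X → E, LipschitzWith (C * K) g ∧ (∀ x, g x ∈ S) ∧ EqOn g f A := by
  rw [smallScaleLipschitzExtensorOf_iff]
  obtain ⟨s, hs⟩ := hS
  constructor
  · rintro ⟨C, M, h⟩
    refine ⟨C, M, fun A K hK f hf hfA => ?_⟩
    rcases A.eq_empty_or_nonempty with rfl | hA
    · exact ⟨fun _ => s, LipschitzWith.const' s, fun _ => hs, eqOn_empty _ _⟩
    · obtain ⟨g, hgf, hg⟩ := h A hA K hK _ (hf.mapsToRestrict hfA)
      exact ⟨fun x => g x, hg,
        fun x => (g x).2, fun a ha => congrArg Subtype.val (hgf ⟨a, ha⟩)⟩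
  · rintro ⟨C, M, h⟩
    refine ⟨C, M, fun A _ K hK f hf => ?_⟩
    let F : X → E := extend Subtype.val (fun a => (f a : E)) fun _ => s
    have hF : ∀ a : A, F a = f a := Subtype.val_injective.extend_apply _ _
    have hFA : LipschitzOnWith K F A := lipschitzOnWith_iff_restrict.2 fun a b => by
      simpa only [domRestrict_apply, hF] using! hf a b
    obtain ⟨g, hg, hgS, hgF⟩ := h A K hK F hFA fun a ha => hF ⟨a, ha⟩ ▸ (f ⟨a, ha⟩).2
    exact ⟨fun x => ⟨g x, hgS x⟩, fun a => Subtype.ext ((hgF a.2).trans (hF a)), hg.subtype_mk hgS⟩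

end Extensor

section Cones

variable {V W : Type*} [NormedAddCommGroup V] [NormedSpace ℝ V] [NormedAddCommGroup W]
  [NormedSpace ℝ W]

/-- A Lipschitz, positively homogeneous map carrying the cone `S` into the cone `T`. -/
structure IsConeMap (K : ℝ≥0) (P : V → W) (S : Set V) (T : Set W) : Prop where
  lipschitz : LipschitzWith K P
  map_smul : ∀ c : ℝ, 0 < c → ∀ v, P (c • v) = c • P v
  mapsTo : MapsTo P S T

namespace IsConeMap

variable {K K' : ℝ≥0} {P : V → W} {Q : W → V} {S : Set V} {T : Set W}

lemma map_zero (hP : IsConeMap K P S T) : P 0 = 0 := by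
  have h : P 0 = (2 : ℝ) • P 0 := by rw [← hP.map_smul 2 two_pos, smul_zero]
  rwa [two_smul, left_eq_add] at h

lemma normalize_map_normalize (hP : IsConeMap K P S T) (v : V) :
    NormedSpace.normalize (P (NormedSpace.normalize v)) = NormedSpace.normalize (P v) := by
  rcases eq_or_ne v 0 with rfl | hv
  · rw [normalize_zero_eq_zero]
  · have hv' : 0 < ‖v‖⁻¹ := inv_pos.2 (norm_pos_iff.2 hv)
    change NormedSpace.normalize (P (‖v‖⁻¹ • v)) = _
    rw [hP.map_smul _ hv', normalize_smul_of_pos hv']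

lemma one_le_mul_norm (hQ : IsConeMap K' Q T S) {v : V} (hv : ‖v‖ = 1) (hQP : Q (P v) = v) :
    1 ≤ K' * ‖P v‖ := by
  simpa only [hQP, hv] using hQ.lipschitz.norm_le_mul hQ.map_zero (P v)

lemma normalize_map_mem (hP : IsConeMap K P S T) (hQ : IsConeMap K' Q T S)
    (hT : ∀ c : ℝ, 0 < c → ∀ w ∈ T, c • w ∈ T) {v : V} (hv : v ∈ S ∩ sphere 0 1)
    (hQP : Q (P v) = v) : NormedSpace.normalize (P v) ∈ T ∩ sphere 0 1 := by
  have hle := hQ.one_le_mul_norm (mem_sphere_zero_iff_norm.1 hv.2) hQP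
  have hne : P v ≠ 0 := by
    intro h
    norm_num [h] at hle
  exact ⟨hT _ (inv_pos.2 (norm_pos_iff.2 hne)) _ (hP.mapsTo hv.1),
    mem_sphere_zero_iff_norm.2 (norm_normalize hne)⟩

lemma lipschitzOnWith_normalize (hP : IsConeMap K P S T) (hQ : IsConeMap K' Q T S)
    (hQP : LeftInvOn Q P S) :
    LipschitzOnWith (2 * K' * K) (NormedSpace.normalize ∘ P) (S ∩ sphere 0 1) :=
  (_root_.lipschitzOnWith_normalize K').comp hP.lipschitz.lipschitzOnWith fun _ hv =>
    hQ.one_le_mul_norm (mem_sphere_zero_iff_norm.1 hv.2) (hQP hv.1)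

end IsConeMap

lemma SmallScaleLipschitzExtensorOf.inter_sphere_of_coneMap {X : Type*} [MetricSpace X]
    {K K' : ℝ≥0} {P : V → W} {Q : W → V} {S : Set V} {T : Set W}
    (h : SmallScaleLipschitzExtensorOf X ↥(S ∩ sphere (0 : V) 1))
    (hS : ∀ c : ℝ, 0 < c → ∀ v ∈ S, c • v ∈ S) (hT : ∀ c : ℝ, 0 < c → ∀ w ∈ T, c • w ∈ T)
    (hP : IsConeMap K P S T) (hQ : IsConeMap K' Q T S) (hQP : LeftInvOn Q P S)
    (hPQ : LeftInvOn P Q T) : SmallScaleLipschitzExtensorOf X ↥(T ∩ sphere (0 : W) 1) := by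
  have hp : MapsTo (NormedSpace.normalize ∘ P) (S ∩ sphere 0 1) (T ∩ sphere 0 1) := fun v hv =>
    hP.normalize_map_mem hQ hT hv (hQP hv.1)
  have hq : MapsTo (NormedSpace.normalize ∘ Q) (T ∩ sphere 0 1) (S ∩ sphere 0 1) := fun w hw =>
    hQ.normalize_map_mem hP hS hw (hPQ hw.1)
  refine h.of_lipschitz_retraction (p := hp.restrict) (q := hq.restrict) (fun w => Subtype.ext ?_)
    ((hP.lipschitzOnWith_normalize hQ hQP).mapsToRestrict hp)
    ((hQ.lipschitzOnWith_normalize hP hPQ).mapsToRestrict hq)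
  change NormedSpace.normalize (P (NormedSpace.normalize (Q w))) = w
  rw [hP.normalize_map_normalize, hPQ w.2.1,
    normalize_eq_self_of_norm_eq_one (mem_sphere_zero_iff_norm.1 w.2.2)]

end Cones

section Covers

lemma exists_lipschitzWith_bump {X ι : Type*} [PseudoMetricSpace X] [Fintype ι] (V : ι → Set X)
    {r : ℝ} (hr : 0 < r) :
    ∃ φ : X → ι → ℝ, LipschitzWith r.toNNReal⁻¹ φ ∧ (∀ x i, φ x i ∈ Icc 0 1) ∧
      (∀ x i, x ∉ V i → φ x i = 0) ∧ ∀ x i, ball x r ⊆ V i → φ x i = 1 := by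
  refine ⟨fun x i => 1 - thickenedIndicator hr (V i)ᶜ x, ?_, fun x i => ⟨?_, ?_⟩,
    fun x i hx => ?_, fun x i hx => ?_⟩
  · refine lipschitzWith_of_forall_apply fun i => LipschitzWith.of_dist_le_mul fun x y => ?_
    rw [dist_sub_left]
    exact (lipschitzWith_thickenedIndicator hr (V i)ᶜ).dist_le_mul x y
  · exact sub_nonneg.2 (mod_cast thickenedIndicator_le_one hr _ x)
  · exact sub_le_self 1 NNReal.zero_le_coe
  · beta_reduce
    rw [thickenedIndicator_one hr _ (mem_compl hx), NNReal.coe_one, sub_self]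
  · have hxV : x ∉ thickening r (V i)ᶜ := fun h => by
      obtain ⟨z, hz, hxz⟩ := mem_thickening_iff.1 h
      exact hz (hx (mem_ball'.2 hxz))
    beta_reduce
    rw [thickenedIndicator_zero hr _ hxV, NNReal.coe_zero, sub_zero]

variable {X ι : Type*} [MetricSpace X] [Fintype ι]

lemma exists_refinement_multiplicityLE_iff {n : ℕ} (hι : Fintype.card ι = n + 1) (U : ι → Set X)
    (s : ℝ) :
    (∃ V : Set (Set X), (∀ W ∈ V, ∃ i, W ⊆ U i) ∧ MultiplicityLE V n ∧
        ∀ x, ∃ W ∈ V, ball x s ⊆ W) ↔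
      ∃ V : ι → Set X, (∀ i, V i ⊆ U i) ∧ (∀ x, ∃ i, x ∉ V i) ∧ ∀ x, ∃ i, ball x s ⊆ V i := by
  constructor
  · rintro ⟨V, hVU, hVm, hVs⟩
    have : Nonempty ι := Fintype.card_pos_iff.1 (hι ▸ n.succ_pos)
    choose! c hc using hVU
    refine ⟨fun i => ⋃ W ∈ {W ∈ V | c W = i}, interior W, fun i => ?_, fun x => ?_, fun x => ?_⟩
    · refine iUnion₂_subset ?_
      rintro W ⟨hW, rfl⟩
      exact interior_subset.trans (hc W hW)
    · by_contra! hx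
      simp only [mem_iUnion₂, mem_ofPred_eq, exists_prop] at hx
      choose W hW hxW using hx
      have hWinj : Injective W := LeftInverse.injective (g := c) fun i => (hW i).2
      have hle : (range W).ncard ≤ {W | W ∈ V ∧ x ∈ interior W}.ncard :=
        ncard_le_ncard (range_subset_iff.2 fun i => ⟨(hW i).1, hxW i⟩) (hVm x).1
      rw [ncard_range_of_injective hWinj, Nat.card_eq_fintype_card, hι] at hle
      exact (hle.trans (hVm x).2).not_gt n.lt_succ_self
    · obtain ⟨W, hW, hxW⟩ := hVs x
      exact ⟨c W, (isOpen_ball.subset_interior_iff.2 hxW).trans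
        (subset_biUnion_of_mem (u := fun W => interior W) (⟨hW, rfl⟩ : W ∈ {W' ∈ V | c W' = c W}))⟩
  · rintro ⟨V, hVU, hVe, hVs⟩
    refine ⟨range V, forall_mem_range.2 fun i => ⟨i, hVU i⟩, fun x => ?_, fun x => ?_⟩
    · obtain ⟨i, hi⟩ := hVe x
      have hsub : {W | W ∈ range V ∧ x ∈ interior W} ⊆ V '' {i}ᶜ := by
        rintro _ ⟨⟨j, rfl⟩, hj⟩
        exact ⟨j, fun hji => hi (hji ▸ interior_subset hj), rfl⟩
      have hcard : ({i}ᶜ : Set ι).ncard = n := by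
        rw [ncard_compl, ncard_singleton, Nat.card_eq_fintype_card, hι, Nat.add_sub_cancel]
      exact ⟨(toFinite _).subset hsub,
        hcard ▸ (ncard_le_ncard hsub (toFinite _)).trans (ncard_image_le (toFinite _))⟩
    · obtain ⟨i, hi⟩ := hVs x
      exact ⟨V i, mem_range_self i, hi⟩

end Covers

section Orthant

variable {ι : Type*}

/-- The boundary of the positive orthant of `ι → ℝ`. Its unit sphere for the sup norm is a radial
copy of the boundary of the standard simplex, and serves as a model of the sphere of dimension
`card ι - 2`. -/
def orthantBoundary (ι : Type*) : Set (ι → ℝ) :=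
  {y | 0 ≤ y ∧ ∃ i, y i = 0}

lemma smul_mem_orthantBoundary {c : ℝ} (hc : 0 < c) {y : ι → ℝ} (hy : y ∈ orthantBoundary ι) :
    c • y ∈ orthantBoundary ι := by
  obtain ⟨hy0, i, hi⟩ := hy
  exact ⟨fun j => mul_nonneg hc.le (hy0 j), i, by rw [Pi.smul_apply, hi, smul_zero]⟩

/-- Translation of `y` along the diagonal to a point with minimal coordinate `0`, projecting
`ι → ℝ` onto `orthantBoundary ι`. -/
noncomputable def subMin (y : ι → ℝ) : ι → ℝ :=
  fun i => y i - ⨅ j, y j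

lemma subMin_smul {c : ℝ} (hc : 0 < c) (y : ι → ℝ) : subMin (c • y) = c • subMin y := by
  ext i
  simp only [subMin, Pi.smul_apply, smul_eq_mul, mul_sub, Real.mul_iInf_of_nonneg hc.le]

lemma sub_subMin_mem_span_one (y : ι → ℝ) : y - subMin y ∈ ℝ ∙ (1 : ι → ℝ) := by
  refine Submodule.mem_span_singleton.2 ⟨⨅ j, y j, ?_⟩
  ext i
  simp only [subMin, Pi.smul_apply, Pi.one_apply, smul_eq_mul, mul_one, Pi.sub_apply,
    sub_sub_cancel]

variable [Finite ι]

lemma subMin_mem_orthantBoundary [Nonempty ι] (y : ι → ℝ) : subMin y ∈ orthantBoundary ι := by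
  obtain ⟨i, hi⟩ := exists_eq_ciInf_of_finite (f := y)
  exact ⟨fun j => sub_nonneg.2 (ciInf_le (finite_range y).bddBelow j), i, sub_eq_zero.2 hi⟩

lemma subMin_eq_self {y : ι → ℝ} (hy : y ∈ orthantBoundary ι) : subMin y = y := by
  obtain ⟨hy0, i, hi⟩ := hy
  have : Nonempty ι := ⟨i⟩
  have hmin : ⨅ j, y j = 0 :=
    le_antisymm (hi ▸ ciInf_le (finite_range y).bddBelow i) (le_ciInf hy0)
  ext j
  rw [subMin, hmin, sub_zero]

lemma subMin_congr [Nonempty ι] {y z : ι → ℝ} (h : y - z ∈ ℝ ∙ (1 : ι → ℝ)) :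
    subMin y = subMin z := by
  obtain ⟨c, hc⟩ := Submodule.mem_span_singleton.1 h
  have hyz : ∀ i, y i = c + z i := fun i => by
    simpa only [Pi.smul_apply, Pi.one_apply, smul_eq_mul, mul_one, Pi.sub_apply,
      eq_sub_iff_add_eq, eq_comm] using congrFun hc i
  ext i
  simp only [subMin, hyz, ← add_ciInf (finite_range z).bddBelow, add_sub_add_left_eq_sub]

end Orthant

section OrthantNorm

variable {ι : Type*} [Fintype ι] [Nonempty ι]

lemma lipschitzWith_iInf_apply : LipschitzWith 1 fun y : ι → ℝ => ⨅ i, y i := by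
  refine LipschitzWith.of_le_add fun y z => ?_
  obtain ⟨i, hi⟩ := exists_eq_ciInf_of_finite (f := z)
  calc ⨅ j, y j ≤ y i := ciInf_le (finite_range y).bddBelow i
    _ ≤ z i + dist (y i) (z i) := by
        rw [← sub_le_iff_le_add']
        exact le_abs_self _
    _ ≤ (⨅ j, z j) + dist y z := add_le_add hi.le (dist_le_pi_dist y z i)

lemma lipschitzWith_subMin : LipschitzWith 2 (subMin : (ι → ℝ) → ι → ℝ) :=
  lipschitzWith_of_forall_apply fun i => by
    simpa only [one_add_one_eq_two] using! (LipschitzWith.eval i).sub lipschitzWith_iInf_apply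

lemma exists_apply_eq_norm {y : ι → ℝ} (hy : 0 ≤ y) : ∃ i, y i = ‖y‖ := by
  obtain ⟨i, hi⟩ := Finite.exists_max y
  refine ⟨i, le_antisymm ((le_abs_self _).trans (norm_le_pi_norm y i)) ?_⟩
  exact (pi_norm_le_iff_of_nonneg (hy i)).2 fun j => (Real.norm_of_nonneg (hy j)).trans_le (hi j)

end OrthantNorm

section SphereModel

variable {ι : Type*} [Fintype ι] {E : Type*} [NormedAddCommGroup E] [NormedSpace ℝ E]
  [FiniteDimensional ℝ E]

lemma exists_continuousLinearMap_ker_eq_span_one [Nonempty ι]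
    (hι : Fintype.card ι = Module.finrank ℝ E + 1) :
    ∃ (L : (ι → ℝ) →L[ℝ] E) (J : E →L[ℝ] ι → ℝ),
      L.ker = ℝ ∙ (1 : ι → ℝ) ∧ LeftInverse L J := by
  let N : Submodule ℝ (ι → ℝ) := ℝ ∙ (1 : ι → ℝ)
  have hN : Module.finrank ℝ N = 1 := finrank_span_singleton one_ne_zero
  have hquot : Module.finrank ℝ ((ι → ℝ) ⧸ N) = Module.finrank ℝ E := by
    have h := N.finrank_quotient_add_finrank
    rw [hN, Module.finrank_fintype_fun_eq_card, hι] at h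
    exact Nat.add_right_cancel h
  let e : ((ι → ℝ) ⧸ N) ≃ₗ[ℝ] E := LinearEquiv.ofFinrankEq _ _ hquot
  obtain ⟨J, hJ⟩ := (e.toLinearMap ∘ₗ N.mkQ).exists_rightInverse_of_surjective
    (LinearMap.range_eq_top.2 (e.surjective.comp N.mkQ_surjective))
  refine ⟨(e.toLinearMap ∘ₗ N.mkQ).toContinuousLinearMap, J.toContinuousLinearMap, ?_,
    LinearMap.congr_fun hJ⟩
  change (e.toLinearMap ∘ₗ N.mkQ).ker = N
  rw [LinearEquiv.ker_comp, N.ker_mkQ]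

theorem smallScaleLipschitzExtensorOf_sphere_iff {X : Type*} [MetricSpace X]
    (hι : Fintype.card ι = Module.finrank ℝ E + 1) :
    SmallScaleLipschitzExtensorOf X ↥(sphere (0 : E) 1) ↔
      SmallScaleLipschitzExtensorOf X ↥(orthantBoundary ι ∩ sphere (0 : ι → ℝ) 1) := by
  have : Nonempty ι := Fintype.card_pos_iff.1 (hι ▸ Nat.succ_pos _)
  obtain ⟨L, J, hL, hLJ⟩ := exists_continuousLinearMap_ker_eq_span_one hι
  have hP : IsConeMap ‖L‖₊ L (orthantBoundary ι) univ :=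
    ⟨L.lipschitz, fun c _ => L.map_smul c, mapsTo_univ _ _⟩
  have hQ : IsConeMap (2 * ‖J‖₊) (subMin ∘ J) univ (orthantBoundary ι) :=
    ⟨lipschitzWith_subMin.comp J.lipschitz,
      fun c hc v => by rw [comp_apply, J.map_smul, subMin_smul hc, comp_apply],
      fun v _ => subMin_mem_orthantBoundary _⟩
  have hQP : LeftInvOn (subMin ∘ J) L (orthantBoundary ι) := fun y hy => by
    have hker : J (L y) - y ∈ L.ker := by
      rw [LinearMap.mem_ker, map_sub, sub_eq_zero]
      exact hLJ (L y)
    rw [comp_apply, subMin_congr (hL ▸ hker), subMin_eq_self hy]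
  have hPQ : LeftInvOn L (subMin ∘ J) univ := fun v _ => by
    have hker : J v - subMin (J v) ∈ L.ker := hL ▸ sub_subMin_mem_span_one (J v)
    rw [LinearMap.mem_ker, map_sub, sub_eq_zero] at hker
    exact hker.symm.trans (hLJ v)
  have hS : ∀ c : ℝ, 0 < c → ∀ y ∈ orthantBoundary ι, c • y ∈ orthantBoundary ι :=
    fun c hc y => smul_mem_orthantBoundary hc
  have hT : ∀ c : ℝ, 0 < c → ∀ v ∈ (univ : Set E), c • v ∈ univ := fun _ _ _ _ => mem_univ _
  rw [← univ_inter (sphere (0 : E) 1)]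
  exact ⟨fun h => h.inter_sphere_of_coneMap hT hS hQ hP hPQ hQP,
    fun h => h.inter_sphere_of_coneMap hS hT hP hQ hQP hPQ⟩

end SphereModel

section Shrinking

/-- At small scales `r`, every `r`-Lebesgue cover `U` of `X` indexed by `ι` can be shrunk,
preserving indices, to a cover `V` of Lebesgue number at least proportional to `r` whose members
have no common point. This is the indexed form of admitting refinements of multiplicity less than
the cardinality of `ι`. -/
def HasSmallScaleShrinkings (X ι : Type*) [PseudoMetricSpace X] : Prop :=
  ∃ t : ℝ, 0 < t ∧ ∃ M : ℝ, 0 < M ∧ ∀ r : ℝ, 0 < r → r < M →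
    ∀ U : ι → Set X, (∀ x, ∃ i, ball x r ⊆ U i) →
      ∃ V : ι → Set X, (∀ i, V i ⊆ U i) ∧ (∀ x, ∃ i, x ∉ V i) ∧ ∀ x, ∃ i, ball x (t * r) ⊆ V i

variable {X ι : Type*} [Fintype ι]

lemma orthantBoundary_inter_sphere_nonempty [Nontrivial ι] :
    (orthantBoundary ι ∩ sphere (0 : ι → ℝ) 1).Nonempty := by
  classical
  obtain ⟨i, j, hij⟩ := exists_pair_ne ι
  refine ⟨Pi.single i 1, ⟨Pi.single_nonneg.2 zero_le_one, j, Pi.single_eq_of_ne' hij 1⟩, ?_⟩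
  rw [mem_sphere_zero_iff_norm, Pi.norm_single, norm_one]

lemma exists_lipschitzWith_mapsTo_orthantBoundary [PseudoMetricSpace X] {r : ℝ} (hr : 0 < r)
    {U : ι → Set X} (hU : ∀ x, ∃ i, ball x r ⊆ U i) :
    ∃ φ : X → ι → ℝ, LipschitzWith r.toNNReal⁻¹ φ ∧ (∀ x i, x ∉ U i → φ x i = 0) ∧
      MapsTo φ {x | ∃ i, φ x i = 0} (orthantBoundary ι ∩ sphere 0 1) := by
  obtain ⟨φ, hφ, hφI, hφ0, hφ1⟩ := exists_lipschitzWith_bump U hr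
  refine ⟨φ, hφ, hφ0, fun x hx => ⟨⟨fun i => (hφI x i).1, hx⟩, mem_sphere_zero_iff_norm.2 ?_⟩⟩
  obtain ⟨i, hi⟩ := hU x
  refine le_antisymm ?_ ?_
  · exact (pi_norm_le_iff_of_nonneg zero_le_one).2 fun j =>
      (Real.norm_of_nonneg (hφI x j).1).trans_le (hφI x j).2
  · exact (hφ1 x i hi).symm.trans_le ((le_abs_self _).trans (norm_le_pi_norm (φ x) i))

theorem SmallScaleLipschitzExtensorOf.hasSmallScaleShrinkings [MetricSpace X] [Nontrivial ι]
    (h : SmallScaleLipschitzExtensorOf X ↥(orthantBoundary ι ∩ sphere (0 : ι → ℝ) 1)) :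
    HasSmallScaleShrinkings X ι := by
  obtain ⟨C, M, h⟩ :=
    (smallScaleLipschitzExtensorOf_coe_iff orthantBoundary_inter_sphere_nonempty).1 h
  refine ⟨(C + 1 : ℝ≥0)⁻¹, by positivity, (M + 1 : ℝ≥0)⁻¹, by positivity, fun r hr hrM U hU => ?_⟩
  obtain ⟨φ, hφ, hφ0, hφmaps⟩ := exists_lipschitzWith_mapsTo_orthantBoundary hr hU
  lift r to ℝ≥0 using hr.le
  rw [Real.toNNReal_coe] at hφ
  have hMr : M < r⁻¹ := by
    have hMr' : r < (M + 1)⁻¹ := mod_cast hrM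
    exact (lt_add_one M).trans (lt_inv_of_lt_inv₀ (mod_cast hr) hMr')
  obtain ⟨g, hg, hgmem, hgφ⟩ := h _ _ hMr φ hφ.lipschitzOnWith hφmaps
  refine ⟨fun i => {x | 0 < g x i}, fun i x hx => ?_, fun x => ?_, fun x => ?_⟩
  · by_contra hxU
    have hφx := hφ0 x i hxU
    exact hx.ne' ((congrFun (hgφ ⟨i, hφx⟩) i).trans hφx)
  · obtain ⟨i, hi⟩ := (hgmem x).1.2
    exact ⟨i, hi.not_gt⟩
  · obtain ⟨i, hi⟩ := exists_apply_eq_norm (hgmem x).1.1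
    rw [mem_sphere_zero_iff_norm.1 (hgmem x).2] at hi
    refine ⟨i, ball_subset_setOf_pos_of_lipschitzWith (lipschitzWith_apply hg i) ?_⟩
    have hs : C * r⁻¹ * ((C + 1)⁻¹ * r) < 1 := by
      have hr0 : r ≠ 0 := mod_cast hr.ne'
      calc C * r⁻¹ * ((C + 1)⁻¹ * r) = C / (C + 1) := by field_simp
        _ < 1 := (div_lt_one (by positivity)).2 (lt_add_one C)
    rw [hi]
    exact_mod_cast hs

end Shrinking

section Gluing

variable {ι : Type*} [Fintype ι]

/-- Interpolation from `φ` to `y` as `‖y‖` grows to `1`. In the shell `1 / 2 ≤ ‖y‖ ≤ 1`, where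
both enter, a coordinate vanishes as soon as it vanishes in `y` and in `φ`. -/
noncomputable def glue (y φ : ι → ℝ) : ι → ℝ :=
  fun i => max (min (y i) (2 * ‖y‖ - 1)) (min (φ i) (1 - ‖y‖))

variable {y φ : ι → ℝ}

lemma glue_nonneg (hy : 0 ≤ y) (hφ : 0 ≤ φ) : 0 ≤ glue y φ := by
  intro i
  rcases le_total ‖y‖ (1 / 2) with h | h
  · exact le_max_of_le_right (le_min (hφ i) (sub_nonneg.2 (by linarith)))
  · exact le_max_of_le_left (le_min (hy i) (sub_nonneg.2 (by linarith)))

lemma glue_mem_orthantBoundary (hy : y ∈ orthantBoundary ι) (hφ : φ ∈ orthantBoundary ι)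
    (h0 : 1 / 2 ≤ ‖y‖ → ∀ i, y i = 0 → φ i = 0) : glue y φ ∈ orthantBoundary ι := by
  refine ⟨glue_nonneg hy.1 hφ.1, ?_⟩
  rcases le_or_gt (1 / 2) ‖y‖ with h | h
  · obtain ⟨i, hi⟩ := hy.2
    refine ⟨i, ?_⟩
    rw [glue, hi, h0 h i hi, min_eq_left (by linarith), max_eq_left (min_le_left 0 _)]
  · obtain ⟨i, hi⟩ := hφ.2
    refine ⟨i, ?_⟩
    have hout : min (y i) (2 * ‖y‖ - 1) ≤ 0 := min_le_of_right_le (by linarith)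
    have hin : min 0 (1 - ‖y‖) = 0 := min_eq_left (by linarith)
    rw [glue, hi, hin, max_eq_right hout]

lemma glue_eq_left (hy : 0 ≤ y) (hφ : 0 ≤ φ) (hy1 : ‖y‖ = 1) : glue y φ = y := by
  ext i
  have hi : y i ≤ 1 := hy1 ▸ (le_abs_self _).trans (norm_le_pi_norm y i)
  have hin : min (φ i) 0 = 0 := min_eq_right (hφ i)
  rw [glue, hy1, sub_self, hin, min_eq_left (by linarith)]
  exact max_eq_left (hy i)

lemma one_fourth_le_norm_glue (hy : 0 ≤ y) (hφ : ∃ i, φ i = 1) :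
    1 / 4 ≤ ‖glue y φ‖ := by
  have : Nonempty ι := ⟨hφ.choose⟩
  obtain ⟨i, hi⟩ : ∃ i, 1 / 4 ≤ glue y φ i := by
    rcases le_total ‖y‖ (3 / 4) with h | h
    · obtain ⟨i, hi⟩ := hφ
      exact ⟨i, le_max_of_le_right (le_min (by linarith) (by linarith))⟩
    · obtain ⟨i, hi⟩ := exists_apply_eq_norm hy
      exact ⟨i, le_max_of_le_left (le_min (by linarith) (by linarith))⟩
  exact hi.trans ((le_abs_self _).trans (norm_le_pi_norm (glue y φ) i))

lemma lipschitzWith_glue {X : Type*} [PseudoMetricSpace X] {h φ : X → ι → ℝ} {K K' : ℝ≥0}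
    (hh : LipschitzWith K h) (hφ : LipschitzWith K' φ) :
    LipschitzWith (max (2 * K) K') fun x => glue (h x) (φ x) := by
  have hnorm : LipschitzWith K fun x => ‖h x‖ := by
    simpa only [one_mul] using! lipschitzWith_one_norm.comp hh
  have hshell : LipschitzWith (2 * K) fun x => 2 * ‖h x‖ - 1 := by
    simpa only [two_mul, add_zero] using (hnorm.add hnorm).sub (LipschitzWith.const (1 : ℝ))
  have hcompl : LipschitzWith K fun x => 1 - ‖h x‖ := by
    simpa only [zero_add] using (LipschitzWith.const (1 : ℝ)).sub hnorm
  refine lipschitzWith_of_forall_apply fun i => ?_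
  have hK : K ≤ 2 * K := le_mul_of_one_le_left' one_le_two
  have hout := ((lipschitzWith_apply hh i).min hshell).weaken (max_le hK le_rfl)
  have hin := ((lipschitzWith_apply hφ i).min hcompl).weaken
    (max_le (le_max_right (2 * K) K') (hK.trans (le_max_left _ _)))
  exact (hout.max hin).weaken (max_le (le_max_left _ _) le_rfl)

end Gluing

section Extension

variable {X ι : Type*} [PseudoMetricSpace X] [Fintype ι]

lemma exists_extension_into_orthantBoundary [Nonempty ι] {K : ℝ≥0} {A : Set X} {f : X → ι → ℝ}
    (hf : LipschitzOnWith K f A) (hfA : MapsTo f A (orthantBoundary ι)) :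
    ∃ h : X → ι → ℝ, LipschitzWith (2 * K) h ∧ (∀ x, h x ∈ orthantBoundary ι) ∧ EqOn h f A := by
  obtain ⟨g, hg, hfg⟩ := hf.extend_pi
  refine ⟨subMin ∘ g, lipschitzWith_subMin.comp hg, fun x => subMin_mem_orthantBoundary _,
    fun a ha => ?_⟩
  rw [comp_apply, ← hfg ha, subMin_eq_self (hfA ha)]

lemma exists_ball_subset_norm_lt_or_pos [Nonempty ι] {K : ℝ≥0} {r : ℝ} {h : X → ι → ℝ}
    (hh : LipschitzWith K h) (hpos : ∀ x, 0 ≤ h x) (hKr : K * r < 1 / 4) (x : X) :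
    ∃ i, ball x r ⊆ {z | ‖h z‖ < 1 / 2 ∨ 0 < h z i} := by
  obtain ⟨i, hi⟩ := exists_apply_eq_norm (hpos x)
  refine ⟨i, ?_⟩
  rcases le_or_gt ‖h x‖ (1 / 4) with hx | hx
  · have hhalf : LipschitzWith K fun z => 1 / 2 - ‖h z‖ := by
      simpa only [one_mul, zero_add] using!
        (LipschitzWith.const (1 / 2 : ℝ)).sub (lipschitzWith_one_norm.comp hh)
    refine (ball_subset_setOf_pos_of_lipschitzWith hhalf ?_).trans fun z hz => Or.inl ?_
    · linarith
    · exact sub_pos.1 hz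
  · exact (ball_subset_setOf_pos_of_lipschitzWith (lipschitzWith_apply hh i) (by linarith)).trans
      fun z hz => Or.inr hz

lemma exists_extension_of_shrinking {K : ℝ≥0} {h : X → ι → ℝ}
    (hh : LipschitzWith K h) (hmem : ∀ x, h x ∈ orthantBoundary ι) {V : ι → Set X} {s : ℝ≥0}
    (hs : 0 < s) (hVh : ∀ i, V i ⊆ {x | ‖h x‖ < 1 / 2 ∨ 0 < h x i})
    (hVe : ∀ x, ∃ i, x ∉ V i) (hVs : ∀ x, ∃ i, ball x s ⊆ V i) :
    ∃ g : X → ι → ℝ, LipschitzWith (8 * max (2 * K) s⁻¹) g ∧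
      (∀ x, g x ∈ orthantBoundary ι ∩ sphere 0 1) ∧ EqOn g h {x | ‖h x‖ = 1} := by
  obtain ⟨φ, hφ, hφI, hφ0, hφ1⟩ := exists_lipschitzWith_bump V (NNReal.coe_pos.2 hs)
  rw [Real.toNNReal_coe] at hφ
  have hφmem : ∀ x, φ x ∈ orthantBoundary ι := fun x =>
    ⟨fun i => (hφI x i).1, (hVe x).imp (hφ0 x)⟩
  have hglue : ∀ x, glue (h x) (φ x) ∈ orthantBoundary ι := fun x =>
    glue_mem_orthantBoundary (hmem x) (hφmem x) fun hx i hi =>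
      hφ0 x i fun hxV => (hVh i hxV).elim hx.not_gt hi.not_gt
  have hnorm : ∀ x, 1 / 4 ≤ ‖glue (h x) (φ x)‖ := fun x =>
    one_fourth_le_norm_glue (hmem x).1 ((hVs x).imp (hφ1 x))
  refine ⟨fun x => NormedSpace.normalize (glue (h x) (φ x)), ?_, fun x => ⟨?_, ?_⟩, fun x hx => ?_⟩
  · have h1 : ∀ x, 1 ≤ (4 : ℝ≥0) * ‖glue (h x) (φ x)‖ := fun x => by
      have := hnorm x
      push_cast
      linarith
    have hlip := (lipschitzOnWith_normalize 4).comp (lipschitzWith_glue hh hφ).lipschitzOnWith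
      fun x (_ : x ∈ univ) => h1 x
    exact (lipschitzOnWith_univ.1 hlip).weaken (by norm_num)
  · exact smul_mem_orthantBoundary (inv_pos.2 (by linarith [hnorm x])) (hglue x)
  · exact mem_sphere_zero_iff_norm.2 (norm_normalize (norm_pos_iff.1 (by linarith [hnorm x])))
  · beta_reduce
    rw [glue_eq_left (hmem x).1 (hφmem x).1 hx, normalize_eq_self_of_norm_eq_one hx]

end Extension

section Equivalence

variable {X ι : Type*} [MetricSpace X] [Fintype ι]

theorem HasSmallScaleShrinkings.smallScaleLipschitzExtensorOf [Nontrivial ι]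
    (h : HasSmallScaleShrinkings X ι) :
    SmallScaleLipschitzExtensorOf X ↥(orthantBoundary ι ∩ sphere (0 : ι → ℝ) 1) := by
  obtain ⟨t, ht, M, hM, h⟩ := h
  lift t to ℝ≥0 using ht.le
  lift M to ℝ≥0 using hM.le
  refine (smallScaleLipschitzExtensorOf_coe_iff orthantBoundary_inter_sphere_nonempty).2
    ⟨8 * max 4 (16 * t⁻¹), (16 * M)⁻¹, fun A K hK f hf hfA => ?_⟩
  have hK0 : 0 < K := pos_of_gt hK
  obtain ⟨F, hF, hFmem, hFf⟩ :=
    exists_extension_into_orthantBoundary hf (hfA.mono_right inter_subset_left)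
  let r : ℝ≥0 := (16 * K)⁻¹
  have hr : 0 < r := by positivity
  have hrM : r < M := by
    rw [mul_inv, inv_mul_lt_iff₀ (by norm_num)] at hK
    rw [inv_lt_comm₀ (by positivity) (mod_cast hM)]
    exact hK
  have hKr : 2 * K * r < 1 / 4 := by
    calc 2 * K * (16 * K)⁻¹ = 1 / 8 := by
          rw [mul_inv, mul_mul_mul_comm, mul_inv_cancel₀ hK0.ne']
          norm_num
      _ < 1 / 4 := by norm_num
  obtain ⟨V, hVF, hVe, hVs⟩ := h r (mod_cast hr) (mod_cast hrM) _
    (exists_ball_subset_norm_lt_or_pos hF (fun x => (hFmem x).1) (mod_cast hKr))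
  obtain ⟨g, hg, hgmem, hgF⟩ :=
    exists_extension_of_shrinking (s := t * r) hF hFmem (mul_pos ht hr) hVF hVe hVs
  refine ⟨g, hg.weaken (le_of_eq ?_), hgmem, fun a ha => ?_⟩
  · have hbump : (t * r)⁻¹ = 16 * t⁻¹ * K := by
      rw [mul_inv, inv_inv]
      ring
    have hdouble : 2 * (2 * K) = 4 * K := by ring
    rw [hbump, hdouble, mul_assoc 8, max_mul_of_nonneg _ _ hK0.le]
  · rw [← hFf ha]
    refine hgF ?_
    rw [mem_ofPred_eq, hFf ha, mem_sphere_zero_iff_norm.1 (hfA ha).2]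

theorem smallScaleLipschitzExtensorOf_orthantBoundary_iff [Nontrivial ι] :
    SmallScaleLipschitzExtensorOf X ↥(orthantBoundary ι ∩ sphere (0 : ι → ℝ) 1) ↔
      HasSmallScaleShrinkings X ι :=
  ⟨fun h => h.hasSmallScaleShrinkings, fun h => h.smallScaleLipschitzExtensorOf⟩

end Equivalence

theorem sphere_small_scale_extensor_iff_cover_refinement_general
    {X E : Type*} [MetricSpace X] [NormedAddCommGroup E] [NormedSpace ℝ E] {m : ℕ}
    (hE : Module.finrank ℝ E = m + 1) :
    SmallScaleLipschitzExtensorOf X (Metric.sphere (0 : E) 1) ↔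
      ∃ t : ℝ, 0 < t ∧ ∃ M : ℝ, 0 < M ∧ ∀ r : ℝ, 0 < r → r < M →
        ∀ U : Fin (m + 2) → Set X, (∀ x : X, ∃ i, Metric.ball x r ⊆ U i) →
          ∃ V : Set (Set X),
            (∀ W ∈ V, ∃ i, W ⊆ U i) ∧
            MultiplicityLE V (m + 1) ∧
            (∀ x : X, ∃ W ∈ V, Metric.ball x (t * r) ⊆ W) := by
  have : FiniteDimensional ℝ E := Module.finite_of_finrank_eq_succ hE
  have hι : Fintype.card (Fin (m + 2)) = m + 1 + 1 := Fintype.card_fin _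
  simp only [smallScaleLipschitzExtensorOf_sphere_iff (hι.trans (congrArg Nat.succ hE.symm)),
    smallScaleLipschitzExtensorOf_orthantBoundary_iff, HasSmallScaleShrinkings,
    exists_refinement_multiplicityLE_iff hι]

theorem sphere_small_scale_extensor_iff_cover_refinement
    {X : Type*} [MetricSpace X] (m : ℕ) :
    SmallScaleLipschitzExtensorOf X (Metric.sphere (0 : EuclideanSpace ℝ (Fin (m + 1))) 1) ↔
      ∃ t : ℝ, 0 < t ∧ ∃ M : ℝ, 0 < M ∧ ∀ r : ℝ, 0 < r → r < M →
        ∀ U : Fin (m + 2) → Set X, (∀ x : X, ∃ i, Metric.ball x r ⊆ U i) →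
          ∃ V : Set (Set X),
            (∀ W ∈ V, ∃ i, W ⊆ U i) ∧
            MultiplicityLE V (m + 1) ∧
            (∀ x : X, ∃ W ∈ V, Metric.ball x (t * r) ⊆ W) :=
  sphere_small_scale_extensor_iff_cover_refinement_general finrank_euclideanSpace_fin
end

section
/- Let X be a metric space of finite capacity dimension (i.e. there is an integer N ≥ 0 such that the capacity dimension of X is at most N). Then for every integer n ≥ 0 the following are equivalent: (a) S^n is a small scale Lipschitz extensor of X; (b) the capacity dimension of X is at most n. -/
/-- The capacity dimension of `X` is at most `n`: there exist `C > 0` and `r₀ > 0` such that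
for every `0 < r < r₀` there is a cover of `X` splitting into `n+1` `r`-disjoint families with
all members of diameter at most `C·r`. -/
def CapacityDimLE (X : Type*) [MetricSpace X] (n : ℕ) : Prop :=
  ∃ C : ℝ, 0 < C ∧ ∃ r₀ : ℝ, 0 < r₀ ∧ ∀ r : ℝ, 0 < r → r < r₀ →
    ∃ U : Fin (n + 1) → Set (Set X),
      (∀ x : X, ∃ i, ∃ V ∈ U i, x ∈ V) ∧
      (∀ i, ∀ V ∈ U i, ∀ W ∈ U i, V ≠ W → ∀ x ∈ V, ∀ y ∈ W, r < dist x y) ∧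
      (∀ i, ∀ V ∈ U i, ∀ x ∈ V, ∀ y ∈ V, dist x y ≤ C * r)

/-!
Extending small scale Lipschitz maps from subsets of `X` to the sphere of an `(n + 1)`-dimensional
space `E` amounts to pushing Lipschitz maps `X → E` away from the origin without changing them where
they are large. If `X` has split covers with `n + 1` families, this is done in the space
`Fin (n + 1) → ℝ` by moving the `k`-th coordinate away from `0` on the `k`-th family.

Conversely, suppose that maps to `E` avoid the origin and that `X` has split covers with `m + 2`
families, where `n ≤ m`. The functions on `m + 2` points modulo constants have dimension
`m + 1 ≥ n + 1`, so the map given by bump functions of the families can be perturbed to avoid the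
constants. At every point some set `S` of coordinates then lies above all the others by a definite
gap, and grouping these sets by cardinality, which ranges over `1, …, m + 1`, gives split covers
with only `m + 1` families. Descending from a bound on the capacity dimension proves the claim.
-/

open Metric Module
open scoped NNReal

section LipschitzMaps

variable {X E F : Type*} [PseudoMetricSpace X]

theorem lipschitzWith_pi_iff {ι : Type*} {Y : ι → Type*} [Fintype ι]
    [∀ i, PseudoMetricSpace (Y i)] {K : ℝ≥0} {f : X → ∀ i, Y i} :
    LipschitzWith K f ↔ ∀ i, LipschitzWith K fun x ↦ f x i := by
  simp only [lipschitzWith_iff_dist_le_mul]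
  refine ⟨fun hf i x y ↦ (dist_le_pi_dist _ _ i).trans (hf x y), fun hf x y ↦ ?_⟩
  exact (dist_pi_le_iff (by positivity)).2 fun i ↦ hf i x y

theorem lipschitzWith_smul_of_norm_le {R : Type*} [SeminormedRing R] [SeminormedAddCommGroup E]
    [Module R E] [IsBoundedSMul R E] {φ : X → R} {v : X → E} {A B P Q : ℝ≥0}
    (hφ : LipschitzWith P φ) (hφA : ∀ x, ‖φ x‖ ≤ A) (hv : LipschitzWith Q v)
    (hvB : ∀ x, ‖v x‖ ≤ B) : LipschitzWith (A * Q + P * B) fun x ↦ φ x • v x := by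
  refine .of_dist_le_mul fun x y ↦ ?_
  have hφ' := hφ.dist_le_mul x y
  have hv' := hv.dist_le_mul x y
  rw [dist_eq_norm] at hφ' hv' ⊢
  calc ‖φ x • v x - φ y • v y‖
      = ‖φ x • (v x - v y) + (φ x - φ y) • v y‖ := by rw [smul_sub, sub_smul]; abel_nf
    _ ≤ ‖φ x‖ * ‖v x - v y‖ + ‖φ x - φ y‖ * ‖v y‖ :=
        norm_add_le_of_le (norm_smul_le _ _) (norm_smul_le _ _)
    _ ≤ A * (Q * dist x y) + P * dist x y * B := by gcongr <;> simp only [hφA, hvB]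
    _ = ↑(A * Q + P * B) * dist x y := by push_cast; ring

theorem exists_lipschitzWith_interpolation [SeminormedAddCommGroup E] [NormedSpace ℝ E]
    [SeminormedAddCommGroup F] [NormedSpace ℝ F] {t : X → F} {f g : X → E} {J K L B : ℝ≥0}
    (ht : LipschitzWith J t) (hf : LipschitzWith K f) (hg : LipschitzWith L g)
    (hfg : ∀ x, ‖g x - f x‖ ≤ B) :
    ∃ h : X → E, LipschitzWith (K + (L + K + 2 * J * B)) h ∧
      (∀ x, ‖h x - f x‖ ≤ ‖g x - f x‖) ∧
      (∀ x, ‖t x‖ ≤ 1 / 2 → h x = g x) ∧ ∀ x, 1 ≤ ‖t x‖ → h x = f x := by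
  have half_pos : (0 : ℝ) < 1 / 2 := by norm_num
  let cut : F → ℝ≥0 := thickenedIndicator half_pos (closedBall 0 (1 / 2))
  let φ : X → ℝ := fun x ↦ cut (t x)
  have hφ_le (x : X) : ‖φ x‖ ≤ (1 : ℝ≥0) := by
    change ‖(cut (t x) : ℝ)‖ ≤ _
    rw [Real.norm_of_nonneg (cut (t x)).coe_nonneg]
    exact_mod_cast thickenedIndicator_le_one half_pos _ _
  have hφ_lip : LipschitzWith (2 * J) φ := by
    have hcut := (lipschitzWith_thickenedIndicator half_pos (closedBall (0 : F) (1 / 2))).comp ht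
    have hinv : (1 / 2 : ℝ).toNNReal⁻¹ = 2 := by
      rw [one_div, Real.toNNReal_inv, inv_inv, Real.toNNReal_ofNat]
    exact hinv ▸ hcut
  have hlip := hf.add (lipschitzWith_smul_of_norm_le hφ_lip hφ_le (hg.sub hf) hfg)
  rw [one_mul] at hlip
  refine ⟨_, hlip, fun x ↦ ?_, fun x hx ↦ ?_, fun x hx ↦ ?_⟩
  · rw [add_sub_cancel_left, norm_smul]
    exact mul_le_of_le_one_left (norm_nonneg _) (hφ_le x)
  · have : cut (t x) = 1 := thickenedIndicator_one half_pos _ (mem_closedBall_zero_iff.2 hx)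
    simp [φ, this]
  · have : cut (t x) = 0 := thickenedIndicator_zero half_pos _ <| by
      rw [thickening_closedBall half_pos half_pos.le, mem_ball_zero_iff]
      linarith
    simp [φ, this]

theorem exists_lipschitzWith_extension [NormedAddCommGroup E] [NormedSpace ℝ E]
    [FiniteDimensional ℝ E] {A : Set X} {f : A → E} {K : ℝ≥0} (hf : LipschitzWith K f) :
    ∃ g : X → E, LipschitzWith (lipschitzExtensionConstant E * K) g ∧ ∀ a : A, g a = f a := by
  have hrestrict : A.domRestrict (Function.extend Subtype.val f 0) = f :=
    funext fun a ↦ Subtype.val_injective.extend_apply f 0 a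
  obtain ⟨g, hg, hg_eq⟩ := LipschitzOnWith.extend_finite_dimension
    (lipschitzOnWith_iff_restrict.2 (hrestrict.symm ▸ hf))
  exact ⟨g, hg, fun a ↦ (hg_eq a.2).symm.trans (congrFun hrestrict a)⟩

end LipschitzMaps

section RadialRetraction

variable {E : Type*} [NormedAddCommGroup E] [NormedSpace ℝ E] {v : E}

/-- The radial retraction of a normed space onto its closed unit ball. Off the open unit ball it
agrees with `NormedSpace.normalize`, which is not Lipschitz near the origin. -/
noncomputable def radialRetraction (v : E) : E := (max 1 ‖v‖)⁻¹ • v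

theorem radialRetraction_of_norm_le_one (hv : ‖v‖ ≤ 1) : radialRetraction v = v := by
  simp [radialRetraction, hv]

theorem radialRetraction_of_one_le_norm (hv : 1 ≤ ‖v‖) :
    radialRetraction v = NormedSpace.normalize v := by
  rw [radialRetraction, max_eq_right hv, NormedSpace.normalize]

theorem norm_radialRetraction_of_one_le_norm (hv : 1 ≤ ‖v‖) : ‖radialRetraction v‖ = 1 := by
  rw [radialRetraction_of_one_le_norm hv, NormedSpace.norm_normalize_eq_one_iff]
  exact norm_pos_iff.1 (one_pos.trans_le hv)

theorem norm_radialRetraction_le_one (v : E) : ‖radialRetraction v‖ ≤ 1 := by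
  rcases le_total ‖v‖ 1 with hv | hv
  · rwa [radialRetraction_of_norm_le_one hv]
  · exact (norm_radialRetraction_of_one_le_norm hv).le

theorem lipschitzWith_radialRetraction : LipschitzWith 2 (radialRetraction : E → E) := by
  refine .of_dist_le_mul fun u v ↦ ?_
  set a := max 1 ‖u‖
  set b := max 1 ‖v‖
  have ha : 1 ≤ a := le_max_left _ _
  have hb : 1 ≤ b := le_max_left _ _
  have hab : |b - a| ≤ ‖u - v‖ := by
    rw [norm_sub_rev]
    exact (abs_max_sub_max_le_max 1 ‖v‖ 1 ‖u‖).trans (by simpa using abs_norm_sub_norm_le v u)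
  have hv : b⁻¹ * ‖v‖ ≤ 1 := inv_mul_le_one_of_le₀ (le_max_right _ _) (by positivity)
  rw [dist_eq_norm, dist_eq_norm]
  calc ‖a⁻¹ • u - b⁻¹ • v‖
      = ‖a⁻¹ • ((u - v) + ((b - a) * b⁻¹) • v)‖ := by
        congr 1
        match_scalars <;> field_simp
        ring
    _ = a⁻¹ * ‖(u - v) + ((b - a) * b⁻¹) • v‖ := by
        rw [norm_smul, Real.norm_of_nonneg (by positivity)]
    _ ≤ 1 * (‖u - v‖ + |b - a| * (b⁻¹ * ‖v‖)) := by
        gcongr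
        · exact inv_le_one_of_one_le₀ ha
        · refine norm_add_le_of_le le_rfl ?_
          rw [norm_smul, norm_mul, Real.norm_eq_abs, Real.norm_of_nonneg (by positivity), mul_assoc]
    _ ≤ 1 * (‖u - v‖ + ‖u - v‖ * 1) := by gcongr
    _ = (2 : ℝ≥0) * ‖u - v‖ := by push_cast; ring

end RadialRetraction

section OriginAvoidable

variable {X E : Type*}

/-- Lipschitz maps from `X` to the normed space `E` can be pushed away from the origin at small
scales: every `L`-Lipschitz map with `L` large is within bounded distance of a
`(C * L)`-Lipschitz map with values outside the ball of radius `c`, and the two maps agree wherever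
the original one leaves the open unit ball. -/
def OriginAvoidable (X E : Type*) [PseudoMetricSpace X] [SeminormedAddCommGroup E] : Prop :=
  ∃ C : ℝ≥0, 0 < C ∧ ∃ c : ℝ≥0, 0 < c ∧ ∃ M : ℝ≥0, ∀ L : ℝ≥0, M < L →
    ∀ F : X → E, LipschitzWith L F →
      ∃ H : X → E, LipschitzWith (C * L) H ∧ (∀ x, c ≤ ‖H x‖) ∧ (∀ x, ‖H x - F x‖ ≤ C) ∧
        ∀ x, 1 ≤ ‖F x‖ → H x = F x

theorem SmallScaleLipschitzExtensorOf.originAvoidable [MetricSpace X] [NormedAddCommGroup E]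
    [NormedSpace ℝ E] [Nontrivial E]
    (h : SmallScaleLipschitzExtensorOf X (sphere (0 : E) 1)) : OriginAvoidable X E := by
  obtain ⟨C, hC, M, hM, h⟩ := h
  lift C to ℝ≥0 using hC.le
  lift M to ℝ≥0 using hM.le
  refine ⟨3 + 2 * C, by positivity, 1, one_pos, M, fun L hL F hF ↦ ?_⟩
  have hP : LipschitzWith (2 * L) (radialRetraction ∘ F) := lipschitzWith_radialRetraction.comp hF
  obtain ⟨g, hg_eq, hg⟩ : ∃ g : X → sphere (0 : E) 1,
      (∀ x, 1 ≤ ‖F x‖ → (g x : E) = radialRetraction (F x)) ∧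
        LipschitzWith (C * (2 * L)) g := by
    rcases Set.eq_empty_or_nonempty {x | 1 ≤ ‖F x‖} with hA | hA
    · obtain ⟨u, hu⟩ := NormedSpace.sphere_nonempty (x := (0 : E)).2 zero_le_one
      exact ⟨fun _ ↦ ⟨u, hu⟩, fun x hx ↦ (hA.subset hx).elim, LipschitzWith.const' _⟩
    · obtain ⟨g, hg_eq, hg⟩ := h _ hA (2 * L) (by norm_cast; linarith [hL, L.2])
        (fun a ↦ ⟨radialRetraction (F a),
          mem_sphere_zero_iff_norm.2 (norm_radialRetraction_of_one_le_norm a.2)⟩)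
        (fun a b ↦ hP.dist_le_mul a b)
      exact ⟨g, fun x hx ↦ congrArg Subtype.val (hg_eq ⟨x, hx⟩),
        .of_dist_le_mul fun x y ↦ by exact_mod_cast hg x y⟩
  have hg_norm (x : X) : ‖(g x : E)‖ = 1 := mem_sphere_zero_iff_norm.1 (g x).2
  have hH_eq (x : X) (hx : 1 ≤ ‖F x‖) : F x + (g x - radialRetraction (F x)) = F x := by
    rw [hg_eq x hx, sub_self, add_zero]
  refine ⟨fun x ↦ F x + (g x - radialRetraction (F x)), ?_, fun x ↦ ?_, fun x ↦ ?_, hH_eq⟩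
  · exact (hF.add ((LipschitzWith.subtype_val _ |>.comp hg).sub hP)).weaken
      (le_of_eq (by ring))
  · rcases le_total 1 ‖F x‖ with hx | hx
    · exact hx.trans_eq (congrArg norm (hH_eq x hx)).symm
    · beta_reduce
      rw [radialRetraction_of_norm_le_one hx, add_sub_cancel, hg_norm x]
      rfl
  · rw [add_sub_cancel_left]
    have := norm_sub_le_of_le (hg_norm x).le (norm_radialRetraction_le_one (F x))
    push_cast
    linarith [C.2]

theorem OriginAvoidable.smallScaleLipschitzExtensorOf_sphere [MetricSpace X]
    [NormedAddCommGroup E] [NormedSpace ℝ E] [FiniteDimensional ℝ E] (h : OriginAvoidable X E) :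
    SmallScaleLipschitzExtensorOf X (sphere (0 : E) 1) := by
  obtain ⟨C, hC, c, hc, M, h⟩ := h
  set K := lipschitzExtensionConstant E
  have hK : 0 < K := lipschitzExtensionConstant_pos E
  refine ⟨2 * (c⁻¹ * (C * K)), by positivity, (M + 1) / K, by positivity,
    fun A _ lam hlam f hf ↦ ?_⟩
  lift lam to ℝ≥0 using (by positivity : (0 : ℝ) ≤ (M + 1) / K).trans hlam.le
  have hM : M < K * lam := by
    rw [div_lt_iff₀' (mod_cast hK)] at hlam
    exact_mod_cast (lt_add_one (M : ℝ)).trans hlam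
  obtain ⟨F, hF, hF_eq⟩ := exists_lipschitzWith_extension
    (LipschitzWith.of_dist_le_mul (f := fun a ↦ (f a : E)) hf)
  have hf_norm (a : A) : ‖(f a : E)‖ = 1 := mem_sphere_zero_iff_norm.1 (f a).2
  obtain ⟨H, hH, hH_norm, -, hH_eq⟩ := h _ hM F hF
  have hcH (x : X) : 1 ≤ ‖(c : ℝ)⁻¹ • H x‖ := by
    rw [norm_smul, norm_inv, NNReal.norm_eq, one_le_inv_mul₀ (mod_cast hc)]
    exact hH_norm x
  have hg := lipschitzWith_radialRetraction.comp ((lipschitzWith_smul (c : ℝ)⁻¹).comp hH)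
  refine ⟨fun x ↦ ⟨radialRetraction ((c : ℝ)⁻¹ • H x),
    mem_sphere_zero_iff_norm.2 (norm_radialRetraction_of_one_le_norm (hcH x))⟩,
    fun a ↦ Subtype.ext ?_, fun x y ↦ (hg.dist_le_mul x y).trans_eq ?_⟩
  · have hHa : H a = f a := by
      rw [hH_eq a (by rw [hF_eq, hf_norm]), hF_eq]
    change radialRetraction ((c : ℝ)⁻¹ • H a) = f a
    rw [radialRetraction_of_one_le_norm (hcH a), hHa,
      NormedSpace.normalize_smul_of_pos (by positivity),
      NormedSpace.normalize_eq_self_of_norm_eq_one (hf_norm a)]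
  · simp only [nnnorm_inv, NNReal.nnnorm_eq]
    push_cast
    ring

end OriginAvoidable

namespace OriginAvoidable

variable {X E E' : Type*} [PseudoMetricSpace X]

theorem of_continuousLinearEquiv [SeminormedAddCommGroup E] [NormedSpace ℝ E]
    [SeminormedAddCommGroup E'] [NormedSpace ℝ E'] (h : OriginAvoidable X E) (e : E ≃L[ℝ] E') :
    OriginAvoidable X E' := by
  obtain ⟨C, hC, c, hc, M, h⟩ := h
  -- Rescaling `e` to a contraction `S` keeps `‖F x‖ ≥ 1` under the inverse of `S`.
  obtain ⟨s, hs, he⟩ := (e : E →L[ℝ] E').bound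
  set S : E →L[ℝ] E' := s⁻¹ • (e : E →L[ℝ] E')
  set T : E' →L[ℝ] E := s • (e.symm : E' →L[ℝ] E)
  have hST (w : E') : S (T w) = w := by simp [S, T, hs.ne']
  have hTS (v : E) : T (S v) = v := by simp [S, T, hs.ne']
  have hS (v : E) : ‖S v‖ ≤ ‖v‖ := by
    simpa [S, norm_smul, abs_of_pos hs, inv_mul_le_iff₀ hs] using he v
  have hS_lip : LipschitzWith 1 S :=
    S.lipschitz.weaken (S.opNorm_le_bound zero_le_one fun v ↦ by simpa using hS v)
  set D : ℝ≥0 := ‖T‖₊ + 1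
  have hT (w : E') : ‖T w‖ ≤ D * ‖w‖ := T.le_of_opNorm_le (by simp [D]) w
  refine ⟨C * D, by positivity, c / D, by positivity, M, fun L hL F hF ↦ ?_⟩
  obtain ⟨H, hH, hH_norm, hH_sub, hH_eq⟩ := h (D * L)
    (hL.trans_le (le_mul_of_one_le_left' le_add_self)) (T ∘ F)
    ((T.lipschitz.comp hF).weaken (by gcongr; exact le_self_add))
  refine ⟨S ∘ H, ?_, fun x ↦ ?_, fun x ↦ ?_, fun x hx ↦ ?_⟩
  · simpa only [one_mul, mul_assoc] using hS_lip.comp hH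
  · rw [NNReal.coe_div, div_le_iff₀' (by positivity)]
    calc (c : ℝ) ≤ ‖T (S (H x))‖ := (hH_norm x).trans_eq (by rw [hTS])
      _ ≤ D * ‖S (H x)‖ := hT _
  · calc ‖S (H x) - F x‖ = ‖S (H x - T (F x))‖ := by rw [map_sub, hST]
      _ ≤ C := (hS _).trans (hH_sub x)
      _ ≤ ↑(C * D) := mod_cast le_mul_of_one_le_right' le_add_self
  · have : 1 ≤ ‖T (F x)‖ := hx.trans (by simpa only [hST] using hS (T (F x)))
    exact (congrArg S (hH_eq x this)).trans (hST _)

/-- The new coordinate needs no perturbation where it is at least `1 / 2`, so it can cut off the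
perturbation of the old one. -/
theorem prod [NormedAddCommGroup E] [NormedSpace ℝ E] [SeminormedAddCommGroup E']
    [NormedSpace ℝ E'] (h : OriginAvoidable X E) : OriginAvoidable X (E × E') := by
  obtain ⟨C, hC, c, hc, M, h⟩ := h
  refine ⟨1 + (C + 1 + 2 * C), by positivity, min c (1 / 2), by positivity, M,
    fun L hL F hF ↦ ?_⟩
  have hF₁ : LipschitzWith L fun x ↦ (F x).1 :=
    one_mul L ▸ LipschitzWith.prod_fst.comp hF
  have hF₂ : LipschitzWith L fun x ↦ (F x).2 :=
    one_mul L ▸ LipschitzWith.prod_snd.comp hF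
  obtain ⟨g, hg, hg_norm, hg_sub, hg_eq⟩ := h L hL _ hF₁
  obtain ⟨H, hH, hH_sub, hH_eq, hH_eq'⟩ :=
    exists_lipschitzWith_interpolation hF₂ hF₁ hg hg_sub
  refine ⟨fun x ↦ (H x, (F x).2), ?_, fun x ↦ ?_, fun x ↦ ?_, fun x hx ↦ ?_⟩
  · refine (hH.prodMk hF₂).weaken (max_le (le_of_eq (by ring)) ?_)
    exact le_mul_of_one_le_left' le_self_add
  · rcases le_total ‖(F x).2‖ (1 / 2) with hx | hx
    · calc ((min c (1 / 2) : ℝ≥0) : ℝ) ≤ c := mod_cast min_le_left _ _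
        _ ≤ ‖H x‖ := hH_eq x hx ▸ hg_norm x
        _ ≤ ‖(H x, (F x).2)‖ := norm_fst_le (H x, (F x).2)
    · calc ((min c (1 / 2) : ℝ≥0) : ℝ) ≤ 1 / 2 := mod_cast min_le_right _ _
        _ ≤ ‖(F x).2‖ := hx
        _ ≤ ‖(H x, (F x).2)‖ := norm_snd_le (H x, (F x).2)
  · have hC : (C : ℝ) ≤ ↑(1 + (C + 1 + 2 * C)) := by push_cast; linarith [C.2]
    refine norm_prod_le_iff.2 ⟨(hH_sub x).trans ((hg_sub x).trans hC), ?_⟩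
    rw [Prod.snd_sub, sub_self, norm_zero]
    exact NNReal.coe_nonneg _
  · rcases le_max_iff.1 hx with hx₁ | hx₂
    · have hH_le : ‖H x - (F x).1‖ ≤ 0 := by simpa [hg_eq x hx₁] using hH_sub x
      exact Prod.ext (sub_eq_zero.1 (norm_le_zero_iff.1 hH_le)) rfl
    · exact Prod.ext (hH_eq' x hx₂) rfl

theorem of_finrank_le [NormedAddCommGroup E] [NormedSpace ℝ E] [FiniteDimensional ℝ E]
    [NormedAddCommGroup E'] [NormedSpace ℝ E'] [FiniteDimensional ℝ E']
    (h : OriginAvoidable X E) (hE : finrank ℝ E ≤ finrank ℝ E') : OriginAvoidable X E' := by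
  have hfinrank : finrank ℝ (E × (Fin (finrank ℝ E' - finrank ℝ E) → ℝ)) = finrank ℝ E' := by
    simp [hE]
  exact h.prod.of_continuousLinearEquiv (.ofFinrankEq hfinrank)

end OriginAvoidable

section SplitCover

variable {X κ : Type*} [PseudoMetricSpace X]

/-- The families `U k` of sets together cover `X`, each of them is `r`-disjoint, and all their
members have diameter at most `D`. The diameter bound is stated pointwise because `Metric.diam` of
an unbounded set is `0`. -/
structure IsSplitCover (U : κ → Set (Set X)) (r D : ℝ) : Prop where
  exists_mem (x : X) : ∃ k, ∃ V ∈ U k, x ∈ V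
  lt_dist (k : κ) : ∀ V ∈ U k, ∀ W ∈ U k, V ≠ W → ∀ x ∈ V, ∀ y ∈ W, r < dist x y
  dist_le (k : κ) : ∀ V ∈ U k, ∀ x ∈ V, ∀ y ∈ V, dist x y ≤ D

/-- On each member of `𝒱` the function `f` oscillates by at most `ε`, hence stays above `-ε` or
below `0`; it is shifted upwards in the first case and downwards in the second. -/
theorem exists_lipschitzWith_le_norm_of_disjoint {𝒱 : Set (Set X)} {r ε L : ℝ≥0} {D : ℝ}
    (hr : 0 < r) (hdisj : ∀ V ∈ 𝒱, ∀ W ∈ 𝒱, V ≠ W → ∀ x ∈ V, ∀ y ∈ W, r < dist x y)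
    (hdiam : ∀ V ∈ 𝒱, ∀ x ∈ V, ∀ y ∈ V, dist x y ≤ D) {f : X → ℝ} (hf : LipschitzWith L f)
    (hLD : L * D ≤ ε) :
    ∃ g : X → ℝ, LipschitzWith (L + 4 * ε * r⁻¹) g ∧ (∀ x, ‖g x - f x‖ ≤ 2 * ε) ∧
      ∀ V ∈ 𝒱, ∀ x ∈ V, ε ≤ ‖g x‖ := by
  have hr' : (0 : ℝ) < r := hr
  let P : Set X := ⋃₀ {V ∈ 𝒱 | ∃ y ∈ V, 0 ≤ f y}
  let θ : X → ℝ≥0 := thickenedIndicator hr' P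
  have hθ_lip : LipschitzWith r⁻¹ θ := by
    simpa only [Real.toNNReal_coe] using lipschitzWith_thickenedIndicator hr' P
  have hσ_lip : LipschitzWith (4 * ε * r⁻¹) fun x ↦ 4 * ε * (θ x : ℝ) - 2 * ε := by
    refine .of_dist_le_mul fun x y ↦ ?_
    rw [dist_sub_right, Real.dist_eq, ← mul_sub, abs_mul, NNReal.coe_mul, mul_assoc,
      abs_of_nonneg (by positivity : (0 : ℝ) ≤ 4 * ε)]
    exact mul_le_mul_of_nonneg_left (hθ_lip.dist_le_mul x y) (by positivity)
  refine ⟨_, hf.add hσ_lip, fun x ↦ ?_, fun V hV x hxV ↦ ?_⟩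
  · have hθ_le : (θ x : ℝ) ≤ 1 := mod_cast thickenedIndicator_le_one hr' P x
    have := mul_le_mul_of_nonneg_left hθ_le ε.coe_nonneg
    have := mul_nonneg ε.coe_nonneg (θ x).coe_nonneg
    rw [add_sub_cancel_left, Real.norm_eq_abs, abs_le]
    constructor <;> linarith
  · by_cases hy : ∃ y ∈ V, 0 ≤ f y
    · have hθ : θ x = 1 := thickenedIndicator_one hr' P ⟨V, ⟨hV, hy⟩, hxV⟩
      obtain ⟨y, hyV, hy⟩ := hy
      have hyx : f y - f x ≤ ε := calc
        f y - f x ≤ L * dist y x := (le_abs_self _).trans (hf.dist_le_mul y x)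
        _ ≤ L * D := by gcongr; exact hdiam V hV y hyV x hxV
        _ ≤ ε := hLD
      refine le_trans ?_ (le_abs_self _)
      rw [hθ, NNReal.coe_one]
      linarith
    · have hθ : θ x = 0 := thickenedIndicator_zero hr' P fun hx ↦ by
        obtain ⟨s, ⟨W, ⟨hW, hy'⟩, hsW⟩, hs⟩ := mem_thickening_iff.1 hx
        have hVW : V ≠ W := fun h ↦ hy (h ▸ hy')
        exact (hdisj V hV W hW hVW x hxV s hsW).not_gt hs
      have hx : f x < 0 := lt_of_not_ge fun hx ↦ hy ⟨x, hxV, hx⟩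
      refine le_trans ?_ (neg_le_abs _)
      rw [hθ, NNReal.coe_zero]
      linarith [ε.coe_nonneg]

theorem IsSplitCover.exists_lipschitzWith_le_norm [Fintype κ] {U : κ → Set (Set X)} {r ε L : ℝ≥0}
    {D : ℝ} (hU : IsSplitCover U r D) (hr : 0 < r) {F : X → κ → ℝ} (hF : LipschitzWith L F)
    (hLD : L * D ≤ ε) :
    ∃ G : X → κ → ℝ, LipschitzWith (L + 4 * ε * r⁻¹) G ∧ (∀ x, ‖G x - F x‖ ≤ 2 * ε) ∧
      ∀ x, ε ≤ ‖G x‖ := by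
  choose g hg hg_sub hg_norm using fun k ↦
    exists_lipschitzWith_le_norm_of_disjoint hr (hU.lt_dist k) (hU.dist_le k)
      (lipschitzWith_pi_iff.1 hF k) hLD
  refine ⟨fun x k ↦ g k x, lipschitzWith_pi_iff.2 hg, fun x ↦ ?_, fun x ↦ ?_⟩
  · exact (pi_norm_le_iff_of_nonneg (by positivity)).2 fun k ↦ hg_sub k x
  · obtain ⟨k, V, hV, hxV⟩ := hU.exists_mem x
    exact (hg_norm k V hV x hxV).trans (norm_le_pi_norm (fun k ↦ g k x) k)

end SplitCover

namespace CapacityDimLE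

variable {X : Type*} [MetricSpace X] {m n : ℕ}

theorem mono (hmn : m ≤ n) (h : CapacityDimLE X m) : CapacityDimLE X n := by
  obtain ⟨C, hC, r₀, hr₀, h⟩ := h
  refine ⟨C, hC, r₀, hr₀, fun r hr hr' ↦ ?_⟩
  obtain ⟨U, hcover, hdisj, hdiam⟩ := h r hr hr'
  have hle : m + 1 ≤ n + 1 := by gcongr
  refine ⟨fun i ↦ {V | ∃ j, Fin.castLE hle j = i ∧ V ∈ U j}, fun x ↦ ?_, ?_, ?_⟩
  · obtain ⟨i, V, hV, hx⟩ := hcover x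
    exact ⟨_, V, ⟨i, rfl, hV⟩, hx⟩
  · rintro _ V ⟨j, rfl, hV⟩ W ⟨k, hk, hW⟩
    exact hdisj j V hV W (Fin.castLE_injective hle hk ▸ hW)
  · rintro _ V ⟨j, -, hV⟩
    exact hdiam j V hV

theorem of_isSplitCover {C κ r₀ : ℝ} (hC : 0 < C) (hκ : 0 < κ) (hr₀ : 0 < r₀)
    (h : ∀ r, 0 < r → r < r₀ →
      ∃ U : Fin (n + 1) → Set (Set X), IsSplitCover U (κ * r) (C * r)) :
    CapacityDimLE X n := by
  refine ⟨C / κ, by positivity, κ * r₀, by positivity, fun r hr hr' ↦ ?_⟩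
  obtain ⟨U, hU⟩ := h (r / κ) (by positivity) ((div_lt_iff₀' hκ).2 hr')
  rw [mul_div_cancel₀ _ hκ.ne', mul_div_left_comm, mul_comm r] at hU
  exact ⟨U, hU.exists_mem, hU.lt_dist, hU.dist_le⟩

theorem originAvoidable (h : CapacityDimLE X n) : OriginAvoidable X (Fin (n + 1) → ℝ) := by
  obtain ⟨C, hC, r₀, hr₀, h⟩ := h
  lift C to ℝ≥0 using hC.le
  lift r₀ to ℝ≥0 using hr₀.le
  have hC : 0 < C := hC
  have hr₀ : 0 < r₀ := hr₀
  refine ⟨4 * C + 4, by positivity, 1 / 8, by positivity, (8 * C * r₀)⁻¹, fun L hL F hF ↦ ?_⟩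
  have hL0 : 0 < L := hL.bot_lt
  set r : ℝ≥0 := (8 * C * L)⁻¹ with hr_def
  have hr : 0 < r := by positivity
  have hrr₀ : r < r₀ := by
    rw [inv_lt_iff_one_lt_mul₀ (by positivity)] at hL ⊢
    linarith
  obtain ⟨U, hcover, hdisj, hdiam⟩ := h r hr hrr₀
  obtain ⟨G, hG, hG_sub, hG_norm⟩ :=
    IsSplitCover.exists_lipschitzWith_le_norm (ε := 1 / 8) ⟨hcover, hdisj, hdiam⟩ hr hF
      (le_of_eq (by rw [hr_def]; push_cast; field_simp))
  have hG_sub (x : X) : ‖G x - F x‖ ≤ (1 / 4 : ℝ≥0) :=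
    (hG_sub x).trans_eq (by push_cast; norm_num)
  obtain ⟨H, hH, hH_sub, hH_eq, hH_eq'⟩ := exists_lipschitzWith_interpolation hF hF hG hG_sub
  have hH_sub (x : X) : ‖H x - F x‖ ≤ 1 / 4 :=
    (hH_sub x).trans ((hG_sub x).trans_eq (by push_cast; rfl))
  refine ⟨H, hH.weaken ?_, fun x ↦ ?_, fun x ↦ ?_, hH_eq'⟩
  · have hr_inv : 4 * (1 / 8) * r⁻¹ = 4 * C * L := by
      rw [hr_def, inv_inv]
      ring
    rw [hr_inv, ← NNReal.coe_le_coe]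
    push_cast
    linarith [L.coe_nonneg]
  · rcases le_total ‖F x‖ (1 / 2) with hx | hx
    · rw [hH_eq x hx]
      exact hG_norm x
    · have := norm_sub_norm_le (F x) (H x)
      rw [norm_sub_rev] at this
      push_cast
      linarith [hH_sub x]
  · refine (hH_sub x).trans ?_
    push_cast
    linarith [C.2]

end CapacityDimLE

section SeparatingFunction

variable {X E ι : Type*} [PseudoMetricSpace X] [Fintype ι]

/-- The hyperplane of functions vanishing at one index represents `ι → ℝ` modulo constants. -/
theorem OriginAvoidable.exists_le_sub [NormedAddCommGroup E] [NormedSpace ℝ E]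
    [FiniteDimensional ℝ E] (h : OriginAvoidable X E) (hE : finrank ℝ E < Fintype.card ι) :
    ∃ C : ℝ≥0, 0 < C ∧ ∃ c : ℝ≥0, 0 < c ∧ ∃ M : ℝ≥0, ∀ L : ℝ≥0, M < L →
      ∀ p : X → ι → ℝ, LipschitzWith L p →
        ∃ Q : X → ι → ℝ, LipschitzWith (C * L) Q ∧ (∀ x, ∃ i j, c ≤ Q x i - Q x j) ∧
          ∀ x, (∃ k l, 2 ≤ p x k - p x l) → ∀ i j, Q x i - Q x j = p x i - p x j := by
  classical
  obtain ⟨i₀⟩ : Nonempty ι := Fintype.card_pos_iff.1 hE.bot_lt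
  let W : Submodule ℝ (ι → ℝ) := LinearMap.ker (LinearMap.proj i₀ : (ι → ℝ) →ₗ[ℝ] ℝ)
  have hproj : (LinearMap.proj i₀ : (ι → ℝ) →ₗ[ℝ] ℝ) ≠ 0 := fun h ↦ by
    simpa using LinearMap.congr_fun h (Pi.single i₀ 1)
  have hW : finrank ℝ E ≤ finrank ℝ W := by
    have := Module.Dual.finrank_ker_add_one_of_ne_zero hproj
    rw [finrank_fintype_fun_eq_card] at this
    exact Nat.le_of_lt_succ (hE.trans_eq this.symm)
  obtain ⟨C, hC, c, hc, M, h⟩ := h.of_finrank_le hW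
  refine ⟨C * 2, by positivity, c, hc, M, fun L hL p hp ↦ ?_⟩
  let F (x : X) : W := ⟨fun i ↦ p x i - p x i₀, sub_self _⟩
  have hpi := lipschitzWith_pi_iff.1 hp
  have hF : LipschitzWith (2 * L) F := two_mul L ▸
    (lipschitzWith_pi_iff.2 fun i ↦ (hpi i).sub (hpi i₀)).subtype_mk _
  obtain ⟨H, hH, hH_norm, -, hH_eq⟩ :=
    h (2 * L) (hL.trans_le (le_mul_of_one_le_left' one_le_two)) F hF
  have hH_zero (x : X) : (H x : ι → ℝ) i₀ = 0 := (H x).2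
  refine ⟨fun x ↦ H x, ?_, fun x ↦ ?_, fun x ⟨k, l, hkl⟩ i j ↦ ?_⟩
  · rw [mul_assoc]
    exact hH
  · obtain ⟨i, hi⟩ : ∃ i, c ≤ ‖(H x : ι → ℝ) i‖ := by
      by_contra! hlt
      exact (hH_norm x).not_gt ((pi_norm_lt_iff hc).2 hlt)
    rcases le_abs'.1 hi with hi | hi
    · exact ⟨i₀, i, by linarith [hH_zero x]⟩
    · exact ⟨i, i₀, by linarith [hH_zero x]⟩
  · have hF_norm : 1 ≤ ‖F x‖ := by
      have hk := (le_abs_self _).trans (norm_le_pi_norm (F x : ι → ℝ) k)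
      have hl := (neg_le_abs _).trans (norm_le_pi_norm (F x : ι → ℝ) l)
      change 1 ≤ ‖(F x : ι → ℝ)‖
      simp only [F] at hk hl ⊢
      linarith
    simp only [hH_eq x hF_norm, F, sub_sub_sub_cancel_right]

/-- Perturb the bump functions of the sets `A i`: where one of them vanishes, another takes its
maximal value, so the perturbation preserves their differences. -/
theorem OriginAvoidable.exists_separating_function [NormedAddCommGroup E] [NormedSpace ℝ E]
    [FiniteDimensional ℝ E] (h : OriginAvoidable X E) (hE : finrank ℝ E < Fintype.card ι) :
    ∃ C : ℝ≥0, 0 < C ∧ ∃ c : ℝ≥0, 0 < c ∧ ∃ ρ₀ : ℝ≥0, 0 < ρ₀ ∧ ∀ ρ : ℝ≥0, 0 < ρ → ρ < ρ₀ →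
      ∀ A : ι → Set X, (∀ x, ∃ i, x ∈ A i) →
        ∃ Q : X → ι → ℝ, LipschitzWith (C / ρ) Q ∧ (∀ x, ∃ i j, c ≤ Q x i - Q x j) ∧
          ∀ x i j, Q x j < Q x i → x ∈ thickening ρ (A i) := by
  obtain ⟨C, hC, c, hc, M, h⟩ := h.exists_le_sub hE
  refine ⟨C * 2, by positivity, c, hc, 2 / (M + 1), by positivity, fun ρ hρ hρ' A hA ↦ ?_⟩
  have hρ_pos : (0 : ℝ) < ρ := hρ
  have hM : M < 2 / ρ := by
    rw [lt_div_comm₀ hρ (by positivity)] at hρ'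
    exact (lt_add_one M).trans hρ'
  let θ (i : ι) : X → ℝ≥0 := thickenedIndicator hρ_pos (A i)
  have hθ_lip (i : ι) : LipschitzWith ρ⁻¹ (θ i) := by
    simpa only [Real.toNNReal_coe] using lipschitzWith_thickenedIndicator hρ_pos (A i)
  have hp : LipschitzWith (2 / ρ) fun x i ↦ 2 * (θ i x : ℝ) := by
    refine lipschitzWith_pi_iff.2 fun i ↦ .of_dist_le_mul fun x y ↦ ?_
    rw [Real.dist_eq, ← mul_sub, abs_mul, abs_two, div_eq_mul_inv, NNReal.coe_mul, mul_assoc]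
    exact mul_le_mul_of_nonneg_left ((hθ_lip i).dist_le_mul x y) zero_le_two
  obtain ⟨Q, hQ, hQ_gap, hQ_eq⟩ := h (2 / ρ) hM _ hp
  refine ⟨Q, mul_div_assoc C 2 ρ ▸ hQ, hQ_gap, fun x i j hij ↦ ?_⟩
  by_contra hx
  have hi : θ i x = 0 := thickenedIndicator_zero hρ_pos _ hx
  obtain ⟨k, hk⟩ := hA x
  have hk : θ k x = 1 := thickenedIndicator_one hρ_pos _ hk
  have := hQ_eq x ⟨k, i, by simp [hi, hk]⟩ i j
  rw [hi, NNReal.coe_zero] at this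
  linarith [(θ j x).coe_nonneg]

end SeparatingFunction

section Thickening

variable {X : Type*} [PseudoMetricSpace X] {V W : Set X} {r ρ : ℝ} {x y : X}

theorem sub_lt_dist_of_mem_thickening (h : ∀ v ∈ V, ∀ w ∈ W, r < dist v w)
    (hx : x ∈ thickening ρ V) (hy : y ∈ thickening ρ W) : r - 2 * ρ < dist x y := by
  obtain ⟨v, hv, hxv⟩ := mem_thickening_iff.1 hx
  obtain ⟨w, hw, hyw⟩ := mem_thickening_iff.1 hy
  linarith [h v hv w hw, dist_triangle4 v x y w, dist_comm v x]

theorem dist_le_add_of_mem_thickening (h : ∀ v ∈ V, ∀ w ∈ W, dist v w ≤ r)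
    (hx : x ∈ thickening ρ V) (hy : y ∈ thickening ρ W) : dist x y ≤ r + 2 * ρ := by
  obtain ⟨v, hv, hxv⟩ := mem_thickening_iff.1 hx
  obtain ⟨w, hw, hyw⟩ := mem_thickening_iff.1 hy
  linarith [h v hv w hw, dist_triangle4 x v w y, dist_comm w y]

end Thickening

section GapSet

variable {X ι : Type*}

/-- The points at which every coordinate of `Q` indexed by `S` exceeds every other coordinate by at
least `δ`. -/
def gapSet (Q : X → ι → ℝ) (δ : ℝ) (S : Finset ι) : Set X :=
  {x | ∀ i ∈ S, ∀ j ∉ S, δ ≤ Q x i - Q x j}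

/-- Cut the interval from `v b` to `v a` into `Fintype.card ι` pieces; one of them contains no value
of `v`, since the endpoint `v a` belongs to none. -/
theorem exists_finset_div_card_le_sub [Fintype ι] {v : ι → ℝ} {c : ℝ} (hc : 0 < c)
    {a b : ι} (hab : c ≤ v a - v b) :
    ∃ S : Finset ι, a ∈ S ∧ b ∉ S ∧ ∀ i ∈ S, ∀ j ∉ S, c / Fintype.card ι ≤ v i - v j := by
  classical
  have hN : 0 < Fintype.card ι := Fintype.card_pos_iff.2 ⟨a⟩
  set δ := c / Fintype.card ι with hδ_def
  have hδ : 0 < δ := by positivity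
  let level (i : ι) : ℕ := ⌊(v i - v b) / δ⌋₊
  have hcard :
      ((Finset.univ.erase a).image level).card < (Finset.range (Fintype.card ι)).card := by
    refine Finset.card_image_le.trans_lt ?_
    rw [Finset.card_erase_of_mem (Finset.mem_univ a), Finset.card_univ, Finset.card_range]
    exact Nat.sub_lt hN one_pos
  obtain ⟨k, hkN, hk⟩ := Finset.exists_mem_notMem_of_card_lt_card hcard
  have ha : (k + 1) * δ ≤ v a - v b := calc
    (k + 1) * δ ≤ Fintype.card ι * δ := by
      gcongr
      exact_mod_cast Finset.mem_range.1 hkN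
    _ = c := by rw [hδ_def]; field_simp
    _ ≤ v a - v b := hab
  refine ⟨Finset.univ.filter fun i ↦ (k + 1) * δ ≤ v i - v b, by simpa using ha, ?_,
    fun i hi j hj ↦ ?_⟩
  · simp only [Finset.mem_filter_univ, sub_self, not_le]
    positivity
  · simp only [Finset.mem_filter_univ, not_le] at hi hj
    have hja : j ≠ a := fun h ↦ ha.not_gt (h ▸ hj)
    have hj_lt : level j < k + 1 :=
      (Nat.floor_lt' k.succ_ne_zero).2 (by rwa [div_lt_iff₀ hδ, Nat.cast_succ])
    have hj_ne : level j ≠ k := fun h ↦ hk <|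
      Finset.mem_image.2 ⟨j, Finset.mem_erase.2 ⟨hja, Finset.mem_univ j⟩, h⟩
    have hj_lt : level j < k := by omega
    have := (div_lt_iff₀ hδ).1 ((Nat.floor_lt' hj_lt.ne_bot).1 hj_lt)
    linarith

variable [PseudoMetricSpace X] [Fintype ι]

theorem le_mul_dist_of_mem_gapSet {Q : X → ι → ℝ} {L : ℝ≥0} (hQ : LipschitzWith L Q) {δ : ℝ}
    {S T : Finset ι} (hST : ¬S ⊆ T) (hTS : ¬T ⊆ S) {x y : X} (hx : x ∈ gapSet Q δ S)
    (hy : y ∈ gapSet Q δ T) : δ ≤ L * dist x y := by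
  obtain ⟨i, hiS, hiT⟩ := Finset.not_subset.1 hST
  obtain ⟨j, hjT, hjS⟩ := Finset.not_subset.1 hTS
  have hQ_sub (k : ι) : |Q x k - Q y k| ≤ L * dist x y :=
    (lipschitzWith_pi_iff.1 hQ k).dist_le_mul x y
  have hi := (abs_le.1 (hQ_sub i)).2
  have hj := (abs_le.1 (hQ_sub j)).1
  linarith [hx i hiS j hjS, hy j hjT i hiT]

/-- The new families are indexed by the cardinality of `S`: distinct sets `S` of the same
cardinality are incomparable, which separates their gap sets, and within one gap set the members of
a single old family are separated already. -/
theorem IsSplitCover.exists_isSplitCover_fin {m : ℕ} (hι : Fintype.card ι = m + 2)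
    {U : ι → Set (Set X)} {r D ρ s c : ℝ} {L : ℝ≥0} {Q : X → ι → ℝ} (hU : IsSplitCover U r D)
    (hQ : LipschitzWith L Q) (hc : 0 < c) (hQ_gap : ∀ x, ∃ i j, c ≤ Q x i - Q x j)
    (hQ_mem : ∀ x i j, Q x j < Q x i → x ∈ thickening ρ (⋃₀ U i))
    (hs : s ≤ r - 2 * ρ) (hsL : L * s < c / Fintype.card ι) :
    ∃ V : Fin (m + 1) → Set (Set X), IsSplitCover V s (D + 2 * ρ) := by
  set δ := c / Fintype.card ι
  have hδ : 0 < δ := div_pos hc (by rw [hι]; positivity)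
  refine ⟨fun k ↦ {Z | ∃ (S : Finset ι) (hS : S.Nonempty), S.card = k + 1 ∧
    ∃ V ∈ U hS.choose, Z = gapSet Q δ S ∩ thickening ρ V}, fun x ↦ ?_, ?_, ?_⟩
  · obtain ⟨a, b, hab⟩ := hQ_gap x
    obtain ⟨S, haS, hbS, hS⟩ := exists_finset_div_card_le_sub hc hab
    have hS_ne : S.Nonempty := ⟨a, haS⟩
    have hS_card : S.card < m + 2 := hι ▸ Finset.card_lt_univ_of_notMem hbS
    have hlt : Q x b < Q x hS_ne.choose :=
      sub_pos.1 (hδ.trans_le (hS _ hS_ne.choose_spec b hbS))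
    obtain ⟨z, ⟨V, hV, hzV⟩, hz⟩ := mem_thickening_iff.1 (hQ_mem x _ b hlt)
    have hS_pos := hS_ne.card_pos
    exact ⟨⟨S.card - 1, by omega⟩, _, ⟨S, hS_ne, by simp only; omega, V, hV, rfl⟩, hS,
      mem_thickening_iff.2 ⟨z, hzV, hz⟩⟩
  · rintro k _ ⟨S, hS, hS_card, V, hV, rfl⟩ _ ⟨T, hT, hT_card, W, hW, rfl⟩ hne x ⟨hxS, hxV⟩ y
      ⟨hyT, hyW⟩
    by_cases hST : S = T
    · subst hST
      have hVW : V ≠ W := fun h ↦ hne (h ▸ rfl)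
      exact hs.trans_lt (sub_lt_dist_of_mem_thickening (hU.lt_dist _ V hV W hW hVW) hxV hyW)
    · have hST' : ¬S ⊆ T := fun h ↦ hST (Finset.eq_of_subset_of_card_le h (by omega))
      have hTS' : ¬T ⊆ S := fun h ↦ hST (Finset.eq_of_subset_of_card_le h (by omega)).symm
      have hle := le_mul_dist_of_mem_gapSet hQ hST' hTS' hxS hyT
      exact lt_of_mul_lt_mul_left (hsL.trans_le hle) L.coe_nonneg
  · rintro k _ ⟨S, hS, -, V, hV, rfl⟩ x ⟨-, hxV⟩ y ⟨-, hyV⟩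
    exact dist_le_add_of_mem_thickening (hU.dist_le _ V hV) hxV hyV

end GapSet

namespace CapacityDimLE

variable {X E : Type*} [MetricSpace X] [NormedAddCommGroup E] [NormedSpace ℝ E]
  [FiniteDimensional ℝ E] {m n : ℕ}

theorem of_succ (hX : OriginAvoidable X E) (hE : finrank ℝ E ≤ m + 1)
    (h : CapacityDimLE X (m + 1)) : CapacityDimLE X m := by
  obtain ⟨C₀, hC₀, r₀, hr₀, h⟩ := h
  obtain ⟨C, hC, c, hc, ρ₀, hρ₀, hX⟩ :=
    hX.exists_separating_function (ι := Fin (m + 2)) (by rw [Fintype.card_fin]; omega)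
  set δ : ℝ := c / Fintype.card (Fin (m + 2))
  have hδ : 0 < δ := div_pos hc (by positivity)
  set κ : ℝ := min (1 / 3) (δ / (6 * C))
  have hκ : 0 < κ := by positivity
  refine of_isSplitCover (C := C₀ + 2 / 3) (κ := κ) (r₀ := min r₀ (3 * ρ₀)) (by positivity) hκ
    (by positivity) fun r hr hr' ↦ ?_
  obtain ⟨hrr₀, hrρ₀⟩ := lt_min_iff.1 hr'
  obtain ⟨U, hcover, hdisj, hdiam⟩ := h r hr hrr₀
  have hU : IsSplitCover U r (C₀ * r) := ⟨hcover, hdisj, hdiam⟩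
  lift r to ℝ≥0 using hr.le
  replace hr : 0 < r := hr
  have hr₃ : r / 3 < ρ₀ := by
    rw [div_lt_iff₀' three_pos]
    exact_mod_cast hrρ₀
  have hκr : κ * r ≤ r - 2 * ((r / 3 : ℝ≥0) : ℝ) := by
    have := mul_le_mul_of_nonneg_right (min_le_left (1 / 3) (δ / (6 * C))) r.coe_nonneg
    push_cast
    linarith
  have hκδ : ((C / (r / 3) : ℝ≥0) : ℝ) * (κ * r) < δ := calc
    ((C / (r / 3) : ℝ≥0) : ℝ) * (κ * r) = 3 * C * κ := by
      push_cast
      field_simp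
    _ ≤ 3 * C * (δ / (6 * C)) := by
      gcongr
      exact min_le_right _ _
    _ = δ / 2 := by
      field_simp
      norm_num
    _ < δ := half_lt_self hδ
  obtain ⟨Q, hQ, hQ_gap, hQ_mem⟩ := hX (r / 3) (by positivity) hr₃ (fun i ↦ ⋃₀ U i) hcover
  obtain ⟨V, hV⟩ :=
    hU.exists_isSplitCover_fin (Fintype.card_fin _) hQ hc hQ_gap hQ_mem hκr hκδ
  refine ⟨V, ?_⟩
  convert hV using 1
  push_cast
  ring

theorem of_le (hX : OriginAvoidable X E) (hE : finrank ℝ E ≤ n + 1) (hnm : n ≤ m)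
    (h : CapacityDimLE X m) : CapacityDimLE X n := by
  induction m, hnm using Nat.le_induction with
  | base => exact h
  | succ m hnm ih => exact ih (h.of_succ hX (by omega))

end CapacityDimLE

theorem sphere_small_scale_extensor_iff_capacity_dim_general {X E : Type*} [MetricSpace X]
    [NormedAddCommGroup E] [NormedSpace ℝ E] (N : ℕ) (hN : CapacityDimLE X N) (n : ℕ)
    (hE : finrank ℝ E = n + 1) :
    SmallScaleLipschitzExtensorOf X (sphere (0 : E) 1) ↔ CapacityDimLE X n := by
  have : FiniteDimensional ℝ E := Module.finite_of_finrank_eq_succ hE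
  have : Nontrivial E := Module.nontrivial_of_finrank_eq_succ hE
  constructor
  · intro h
    rcases le_total N n with hNn | hnN
    · exact hN.mono hNn
    · exact hN.of_le h.originAvoidable hE.le hnN
  · intro h
    have hfinrank : finrank ℝ (Fin (n + 1) → ℝ) ≤ finrank ℝ E := by
      rw [finrank_fin_fun, hE]
    exact (h.originAvoidable.of_finrank_le hfinrank).smallScaleLipschitzExtensorOf_sphere

theorem sphere_small_scale_extensor_iff_capacity_dim
    {X : Type*} [MetricSpace X] (N : ℕ) (hN : CapacityDimLE X N) (n : ℕ) :
    SmallScaleLipschitzExtensorOf X (Metric.sphere (0 : EuclideanSpace ℝ (Fin (n + 1))) 1) ↔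
      CapacityDimLE X n :=
  sphere_small_scale_extensor_iff_capacity_dim_general N hN n finrank_euclideanSpace_fin
end
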